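/- arXiv:2412.00336 — 5 statements merged into one kernel-verified Lean document; each statement's English description precedes it below -/
import Mathlib

section
/- For all n ≥ 2, the number of nonnesting permutations of the multiset {1,1,2,2,…,n,n} that avoid both patterns 132 and 312 equals 4·3^(n−2). -/
/-- `w` is a permutation of the multiset `{1,1,2,2,…,n,n}`:
a word in which every value in `{1,…,n}` occurs exactly twice
and no other value occurs. -/
def IsMultisetPerm (n : ℕ) (w : List ℕ) : Prop :=
  ∀ i : ℕ, w.count i = if 1 ≤ i ∧ i ≤ n then 2 else 0

/-- `t` is order-isomorphic to the word `σ`: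
same length, and entries compare (both `<` and `=`) in the same way. -/
def OrderIsoWord (t σ : List ℕ) : Prop :=
  t.length = σ.length ∧
  ∀ r s : ℕ, r < σ.length → s < σ.length →
    ((t.getD r 0 < t.getD s 0 ↔ σ.getD r 0 < σ.getD s 0) ∧
     (t.getD r 0 = t.getD s 0 ↔ σ.getD r 0 = σ.getD s 0))

/-- `w` contains the pattern `σ`: some subsequence of `w`
is order-isomorphic to `σ`. -/
def Contains (w σ : List ℕ) : Prop :=
  ∃ t : List ℕ, t.Sublist w ∧ OrderIsoWord t σ

/-- `w` avoids the pattern `σ`. -/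
def Avoids (w σ : List ℕ) : Prop := ¬ Contains w σ

/-- `w` is a nonnesting permutation of `{1,1,2,2,…,n,n}`:
it avoids the patterns `1221` and `2112`. -/
def IsNonnesting (n : ℕ) (w : List ℕ) : Prop :=
  IsMultisetPerm n w ∧ Avoids w [1,2,2,1] ∧ Avoids w [2,1,1,2]

/-!
Read the words from right to left: avoiding 132 and 312 becomes avoiding 213 and 231,
that is, no letter lies strictly between two letters to its right. Hence a word with alphabet `s`
starts with an end `e` (the minimum or the maximum) of `s`. Let `m` be the other end. The next
letter is `e` or `m`, since both still occur to the right of the first letter. If it is `m`, the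
third letter is again `e` or `m`, and it is `e` because in `e m m … e` the pair `m m` would be
nested. Deleting both copies of `e` from `e e u` leaves an arbitrary word on `s \ {e}`, and
deleting them from `e m e u` leaves an arbitrary word on `s \ {e}` that starts with its end `m`.
So if `f k` words on `k ≥ 2` letters start with a given end, hence `2 * f k` words exist in total,
then `f (k + 1) = 2 * f k + f k`, while `f 2 = 2`.
-/

open Set
open scoped List

section Words

variable {α : Type*} {a b c e m : α} {u w : List α}

/-- `w` is a permutation of the multiset containing every element of `s` twice. -/
def IsDoubledPerm [DecidableEq α] (s : Finset α) (w : List α) : Prop :=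
  ∀ i, w.count i = if i ∈ s then 2 else 0

/-- `w` avoids the patterns `1221` and `2112`. -/
def Nonnesting (w : List α) : Prop :=
  ∀ ⦃a b⦄, [a, b, b, a] <+ w → a = b

section DoubledPerm

variable [DecidableEq α] {s : Finset α}

theorem IsDoubledPerm.mem_iff (h : IsDoubledPerm s w) : a ∈ w ↔ a ∈ s := by
  rw [← List.count_pos_iff, h a]
  split_ifs with ha <;> simp [ha]

theorem IsDoubledPerm.mem_tail (h : IsDoubledPerm s (a :: w)) (hb : b ∈ s) : b ∈ w := by
  have hcount := h b
  rw [← List.count_pos_iff]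
  grind

theorem isDoubledPerm_empty : IsDoubledPerm ∅ w ↔ w = [] := by
  simp [IsDoubledPerm, List.eq_nil_iff_forall_not_mem, List.count_eq_zero]

theorem isDoubledPerm_congr (h : u ~ w) : IsDoubledPerm s u ↔ IsDoubledPerm s w := by
  simp only [IsDoubledPerm, h.count_eq]

theorem isDoubledPerm_cons_cons_self (he : e ∈ s) :
    IsDoubledPerm s (e :: e :: w) ↔ IsDoubledPerm (s.erase e) w := by
  refine forall_congr' fun i ↦ ?_
  obtain rfl | hi := eq_or_ne i e
  · simp [he]
  · simp [hi, hi.symm]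

end DoubledPerm

section Nonnesting

theorem nonnesting_reverse : Nonnesting w.reverse ↔ Nonnesting w := by
  refine forall₂_congr fun a b ↦ ?_
  rw [← List.reverse_sublist, List.reverse_reverse]
  rfl

theorem nonnesting_cons :
    Nonnesting (a :: w) ↔ Nonnesting w ∧ ∀ b, [b, b, a] <+ w → a = b := by
  simp only [Nonnesting, List.cons_sublist_cons']
  grind

theorem nonnesting_cons_cons_self (he : e ∉ w) : Nonnesting (e :: e :: w) ↔ Nonnesting w := by
  have not_sublist : ∀ b, ¬ [b, b, e] <+ w := fun b h ↦ he (h.subset (by simp))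
  simp only [nonnesting_cons, List.cons_sublist_cons']
  grind

theorem nonnesting_cons_cons_cons (he : e ∉ m :: u) :
    Nonnesting (e :: m :: e :: u) ↔ Nonnesting (m :: u) := by
  have not_sublist : ∀ l, e ∈ l → ¬ l <+ u := fun l hl h ↦ he (.tail _ (h.subset hl))
  simp only [nonnesting_cons, List.cons_sublist_cons']
  grind

end Nonnesting

theorem triplewise_iff_forall_sublist {p : α → α → α → Prop} :
    w.Triplewise p ↔ ∀ a b c, [a, b, c] <+ w → p a b c := by
  induction w with
  | nil => simp
  | cons x w ih =>
    simp only [List.triplewise_cons, List.pairwise_iff_forall_sublist, ih, List.cons_sublist_cons']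
    grind

variable [LinearOrder α] {s : Finset α}

/-- `w` avoids the patterns `132` and `312`: in a subsequence `a b c`, the letter `c` never lies
strictly between `a` and `b`. -/
def Avoids132And312 (w : List α) : Prop :=
  w.Triplewise fun a b c ↦ c ∉ uIoo a b

/-- `w` avoids the patterns `213` and `231`, the reversals of `312` and `132`. -/
def Avoids213And231 (w : List α) : Prop :=
  w.Triplewise fun a b c ↦ a ∉ uIoo b c

theorem avoids213And231_reverse : Avoids213And231 w.reverse ↔ Avoids132And312 w := by
  simp only [Avoids213And231, Avoids132And312, List.triplewise_reverse, uIoo_comm]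

theorem avoids213And231_cons :
    Avoids213And231 (c :: w) ↔ (∀ a ∈ w, ∀ b ∈ w, c ∉ uIoo a b) ∧ Avoids213And231 w := by
  have : Std.Symm fun a b ↦ c ∉ uIoo a b := ⟨fun a b h ↦ by rwa [uIoo_comm]⟩
  rw [Avoids213And231, List.triplewise_cons]
  exact and_congr_left' ⟨fun h a ha b hb ↦ h.forall_of_forall (by simp) ha hb,
    fun h ↦ List.pairwise_of_forall_mem_list h⟩

theorem Avoids213And231.eq_cons_or_eq_cons (h : Avoids213And231 w) (he : e ∈ w) (hm : m ∈ w)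
    (hw : ∀ a ∈ w, a ∈ uIcc e m) : (∃ u, w = e :: u) ∨ ∃ u, w = m :: u := by
  obtain ⟨c, u, rfl⟩ := List.exists_cons_of_ne_nil (List.ne_nil_of_mem he)
  have hc : c = e ∨ c = m := by
    have not_between := (avoids213And231_cons.1 h).1 e
    have between := hw c List.mem_cons_self
    grind [uIcc, uIoo]
  obtain rfl | rfl := hc
  exacts [.inl ⟨u, rfl⟩, .inr ⟨u, rfl⟩]

/-- `e` and `m` are the minimum and the maximum of `s`, in either order. -/
structure AreEnds (s : Finset α) (e m : α) : Prop where
  left_mem : e ∈ s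
  right_mem : m ∈ s
  mem_uIcc : ∀ ⦃a⦄, a ∈ s → a ∈ uIcc e m

namespace AreEnds

theorem symm (h : AreEnds s e m) : AreEnds s m e :=
  ⟨h.right_mem, h.left_mem, by simpa only [uIcc_comm m e] using h.mem_uIcc⟩

theorem exists_of_nonempty (hs : s.Nonempty) : ∃ e m, AreEnds s e m :=
  ⟨s.min' hs, s.max' hs, s.min'_mem hs, s.max'_mem hs, fun a ha ↦
    mem_uIcc_of_le (s.min'_le a ha) (s.le_max' a ha)⟩

theorem ne (h : AreEnds s e m) (hs : 1 < s.card) : e ≠ m := by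
  rintro rfl
  have eq_left : ∀ a ∈ s, a = e := fun a ha ↦ by simpa using h.mem_uIcc ha
  exact hs.not_ge (Finset.card_le_one.2 fun a ha b hb ↦ (eq_left a ha).trans (eq_left b hb).symm)

theorem right_mem_erase (h : AreEnds s e m) (hne : e ≠ m) : m ∈ s.erase e :=
  Finset.mem_erase.2 ⟨hne.symm, h.right_mem⟩

theorem exists_erase (h : AreEnds s e m) (hne : e ≠ m) : ∃ e', AreEnds (s.erase e) e' m := by
  obtain ⟨x, y, hxy⟩ := exists_of_nonempty ⟨m, h.right_mem_erase hne⟩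
  have hm : m = x ∨ m = y := by
    have := hxy.mem_uIcc (h.right_mem_erase hne)
    have := h.mem_uIcc (Finset.mem_of_mem_erase hxy.left_mem)
    have := h.mem_uIcc (Finset.mem_of_mem_erase hxy.right_mem)
    grind [uIcc]
  obtain rfl | rfl := hm
  exacts [⟨y, hxy.symm⟩, ⟨x, hxy⟩]

theorem avoids213And231_cons_iff (h : AreEnds s e m) (hw : ∀ a ∈ w, a ∈ s) :
    Avoids213And231 (e :: w) ↔ Avoids213And231 w := by
  refine avoids213And231_cons.trans (and_iff_right fun a ha b hb ↦ ?_)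
  have := h.mem_uIcc (hw a ha)
  have := h.mem_uIcc (hw b hb)
  grind [uIcc, uIoo]

end AreEnds

/-- The reversals of the nonnesting permutations of two copies of `s` that avoid `132` and
`312`. -/
def reverseAvoiders (s : Finset α) : Set (List α) :=
  {w | IsDoubledPerm s w ∧ Nonnesting w ∧ Avoids213And231 w}

/-- The words that follow an initial letter `e` in the elements of `reverseAvoiders s`. -/
def reverseAvoiderTails (s : Finset α) (e : α) : Set (List α) :=
  List.cons e ⁻¹' reverseAvoiders s

theorem reverseAvoiders_eq_union (h : AreEnds s e m) :
    reverseAvoiders s =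
      List.cons e '' reverseAvoiderTails s e ∪ List.cons m '' reverseAvoiderTails s m := by
  ext w
  constructor
  · intro hw
    have ⟨hperm, _, havoids⟩ := hw
    obtain ⟨u, rfl⟩ | ⟨u, rfl⟩ := havoids.eq_cons_or_eq_cons (hperm.mem_iff.2 h.left_mem)
      (hperm.mem_iff.2 h.right_mem) fun a ha ↦ h.mem_uIcc (hperm.mem_iff.1 ha)
    exacts [.inl ⟨u, hw, rfl⟩, .inr ⟨u, hw, rfl⟩]
  · rintro (⟨u, hu, rfl⟩ | ⟨u, hu, rfl⟩) <;> exact hu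

theorem cons_cons_self_mem_reverseAvoiders (h : AreEnds s e m) :
    e :: e :: w ∈ reverseAvoiders s ↔ w ∈ reverseAvoiders (s.erase e) := by
  refine (and_congr_left' (isDoubledPerm_cons_cons_self h.left_mem)).trans
    (and_congr_right fun hperm ↦ ?_)
  have hw : ∀ a ∈ w, a ∈ s := fun a ha ↦ Finset.mem_of_mem_erase (hperm.mem_iff.1 ha)
  rw [nonnesting_cons_cons_self (by simp [hperm.mem_iff]),
    h.avoids213And231_cons_iff (by simpa [h.left_mem] using hw), h.avoids213And231_cons_iff hw]

theorem cons_cons_cons_mem_reverseAvoiders (h : AreEnds s e m) :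
    e :: m :: e :: u ∈ reverseAvoiders s ↔ m :: u ∈ reverseAvoiders (s.erase e) := by
  have hswap : e :: m :: e :: u ~ e :: e :: m :: u := .cons e (.swap e m u)
  refine (and_congr_left' ((isDoubledPerm_congr hswap).trans
    (isDoubledPerm_cons_cons_self h.left_mem))).trans (and_congr_right fun hperm ↦ ?_)
  have hu : ∀ a ∈ u, a ∈ s := fun a ha ↦
    Finset.mem_of_mem_erase (hperm.mem_iff.1 (List.mem_cons_of_mem m ha))
  have heu : ∀ a ∈ e :: u, a ∈ s := by simpa [h.left_mem] using hu
  have hmeu : ∀ a ∈ m :: e :: u, a ∈ s := by simpa [h.right_mem] using heu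
  rw [nonnesting_cons_cons_cons (by rw [hperm.mem_iff]; exact Finset.notMem_erase e s),
    h.avoids213And231_cons_iff hmeu, h.symm.avoids213And231_cons_iff heu,
    h.avoids213And231_cons_iff hu, h.symm.avoids213And231_cons_iff hu]

theorem eq_cons_or_eq_cons_cons_of_mem_reverseAvoiderTails (h : AreEnds s e m) (hne : e ≠ m)
    (hw : w ∈ reverseAvoiderTails s e) : (∃ u, w = e :: u) ∨ ∃ u, w = m :: e :: u := by
  obtain ⟨hperm, hnonnesting, havoids⟩ := hw
  have hend : ∀ a ∈ e :: w, a ∈ uIcc e m := fun a ha ↦ h.mem_uIcc (hperm.mem_iff.1 ha)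
  have havoids_tail := (avoids213And231_cons.1 havoids).2
  obtain ⟨u, rfl⟩ | ⟨v, rfl⟩ := havoids_tail.eq_cons_or_eq_cons (hperm.mem_tail h.left_mem)
    (hperm.mem_tail h.right_mem) fun a ha ↦ hend a (.tail _ ha)
  · exact .inl ⟨u, rfl⟩
  have he : e ∈ v := List.mem_of_ne_of_mem hne (hperm.mem_tail h.left_mem)
  have hm : m ∈ v := List.mem_of_ne_of_mem hne.symm
    (((isDoubledPerm_congr (.swap m e v)).1 hperm).mem_tail h.right_mem)
  obtain ⟨u, rfl⟩ | ⟨u, rfl⟩ := (avoids213And231_cons.1 havoids_tail).2.eq_cons_or_eq_cons he hm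
    fun a ha ↦ hend a (.tail _ (.tail _ ha))
  · exact .inr ⟨u, rfl⟩
  · have hnested : [e, m, m, e] <+ e :: m :: m :: u :=
      ((List.singleton_sublist.2 (List.mem_of_ne_of_mem hne he)).cons_cons m).cons_cons m
        |>.cons_cons e
    exact absurd (hnonnesting hnested) hne

theorem reverseAvoiderTails_eq_union (h : AreEnds s e m) (hne : e ≠ m) :
    reverseAvoiderTails s e = List.cons e '' reverseAvoiders (s.erase e) ∪
      (fun u ↦ m :: e :: u) '' reverseAvoiderTails (s.erase e) m := by
  ext w
  constructor
  · intro hw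
    obtain ⟨u, rfl⟩ | ⟨u, rfl⟩ := eq_cons_or_eq_cons_cons_of_mem_reverseAvoiderTails h hne hw
    exacts [.inl ⟨u, (cons_cons_self_mem_reverseAvoiders h).1 hw, rfl⟩,
      .inr ⟨u, (cons_cons_cons_mem_reverseAvoiders h).1 hw, rfl⟩]
  · rintro (⟨u, hu, rfl⟩ | ⟨u, hu, rfl⟩)
    exacts [(cons_cons_self_mem_reverseAvoiders h).2 hu,
      (cons_cons_cons_mem_reverseAvoiders h).2 hu]

theorem encard_reverseAvoiders (h : AreEnds s e m) (hne : e ≠ m) :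
    (reverseAvoiders s).encard =
      (reverseAvoiderTails s e).encard + (reverseAvoiderTails s m).encard := by
  rw [reverseAvoiders_eq_union h, encard_union_eq, List.cons_injective.encard_image,
    List.cons_injective.encard_image]
  rw [disjoint_left]
  rintro _ ⟨u, -, rfl⟩ ⟨v, -, huv⟩
  exact hne (List.cons.inj huv).1.symm

theorem encard_reverseAvoiderTails (h : AreEnds s e m) (hne : e ≠ m) :
    (reverseAvoiderTails s e).encard =
      (reverseAvoiders (s.erase e)).encard + (reverseAvoiderTails (s.erase e) m).encard := by
  have hinj : Function.Injective fun u ↦ m :: e :: u :=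
    List.cons_injective.comp List.cons_injective
  rw [reverseAvoiderTails_eq_union h hne, encard_union_eq, List.cons_injective.encard_image,
    hinj.encard_image]
  rw [disjoint_left]
  rintro _ ⟨u, -, rfl⟩ ⟨v, -, huv⟩
  exact hne (List.cons.inj huv).1.symm

theorem reverseAvoiders_empty : reverseAvoiders (∅ : Finset α) = {[]} := by
  ext w
  simp only [reverseAvoiders, mem_ofPred_eq, isDoubledPerm_empty, mem_singleton_iff,
    and_iff_left_iff_imp]
  rintro rfl
  exact ⟨by simp [Nonnesting], .nil⟩

theorem reverseAvoiders_singleton (a : α) : reverseAvoiders {a} = {[a, a]} := by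
  have h : AreEnds {a} a a := ⟨by simp, by simp, by simp⟩
  ext w
  constructor
  · intro hw
    have hall : ∀ b ∈ w, b = a := fun b hb ↦ by simpa using hw.1.mem_iff.1 hb
    have hlength : w.length = 2 := by
      rw [← List.count_eq_length.2 fun b hb ↦ (hall b hb).symm, hw.1 a]
      simp
    exact List.eq_replicate_iff.2 ⟨hlength, hall⟩
  · rintro rfl
    rw [cons_cons_self_mem_reverseAvoiders h, Finset.erase_singleton, reverseAvoiders_empty]
    rfl

theorem reverseAvoiderTails_singleton (a : α) : reverseAvoiderTails {a} a = {[a]} := by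
  ext w
  simp [reverseAvoiderTails, reverseAvoiders_singleton]

theorem encard_reverseAvoiderTails_of_card {k : ℕ} (hs : s.card = k + 2) (h : AreEnds s e m) :
    (reverseAvoiderTails s e).encard = 2 * 3 ^ k := by
  induction k generalizing s e m with
  | zero =>
    have hne := h.ne (by omega)
    have herase : s.erase e = {m} := by
      refine (Finset.eq_of_subset_of_card_le ?_ ?_).symm
      · simpa using h.right_mem_erase hne
      · simp [Finset.card_erase_of_mem h.left_mem, hs]
    rw [encard_reverseAvoiderTails h hne, herase, reverseAvoiders_singleton,
      reverseAvoiderTails_singleton]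
    simp [one_add_one_eq_two]
  | succ k ih =>
    have hne := h.ne (by omega)
    have hcard : (s.erase e).card = k + 2 := by rw [Finset.card_erase_of_mem h.left_mem, hs]; rfl
    obtain ⟨e', h'⟩ := h.exists_erase hne
    rw [encard_reverseAvoiderTails h hne, encard_reverseAvoiders h' (h'.ne (by omega)),
      ih hcard h', ih hcard h'.symm]
    ring

theorem encard_reverseAvoiders_of_card {k : ℕ} (hs : s.card = k + 2) :
    (reverseAvoiders s).encard = 4 * 3 ^ k := by
  obtain ⟨e, m, h⟩ := AreEnds.exists_of_nonempty (Finset.card_pos.1 (by omega : 0 < s.card))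
  rw [encard_reverseAvoiders h (h.ne (by omega)), encard_reverseAvoiderTails_of_card hs h,
    encard_reverseAvoiderTails_of_card hs h.symm]
  ring

theorem reverse_mem_reverseAvoiders : w.reverse ∈ reverseAvoiders s ↔
    IsDoubledPerm s w ∧ Nonnesting w ∧ Avoids132And312 w :=
  and_congr (isDoubledPerm_congr w.reverse_perm)
    (and_congr nonnesting_reverse avoids213And231_reverse)

theorem nonnesting_avoid_132_312_general (s : Finset α) (hs : 2 ≤ s.card) :
    {w | IsDoubledPerm s w ∧ Nonnesting w ∧ Avoids132And312 w}.ncard = 4 * 3 ^ (s.card - 2) := by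
  have hcard : (reverseAvoiders s).encard = 4 * 3 ^ (s.card - 2) :=
    encard_reverseAvoiders_of_card (by omega)
  simp only [← reverse_mem_reverseAvoiders, ← mem_preimage, ofPred_mem_eq]
  rw [ncard, encard_preimage_of_bijective List.reverse_involutive.bijective, hcard]
  exact_mod_cast ENat.toNat_natCast (4 * 3 ^ (s.card - 2))

end Words

section Patterns

variable {a b c d : ℕ} {w σ τ : List ℕ}

theorem isMultisetPerm_iff {n : ℕ} : IsMultisetPerm n w ↔ IsDoubledPerm (Finset.Icc 1 n) w := by
  simp only [IsMultisetPerm, IsDoubledPerm, Finset.mem_Icc]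

theorem orderIsoWord_132_or_312_iff :
    OrderIsoWord [a, b, c] [1, 3, 2] ∨ OrderIsoWord [a, b, c] [3, 1, 2] ↔ c ∈ uIoo a b := by
  simp only [OrderIsoWord, List.length_cons, List.length_nil, ← imp_forall_iff,
    Nat.forall_lt_succ_right, Nat.not_lt_zero, IsEmpty.forall_iff, implies_true, true_and,
    and_true, List.getD_cons_zero, List.getD_cons_succ, uIoo, mem_Ioo, inf_lt_iff, lt_sup_iff]
  omega

theorem orderIsoWord_1221_or_2112_iff :
    OrderIsoWord [a, b, c, d] [1, 2, 2, 1] ∨ OrderIsoWord [a, b, c, d] [2, 1, 1, 2] ↔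
      a ≠ b ∧ b = c ∧ a = d := by
  simp only [OrderIsoWord, List.length_cons, List.length_nil, ← imp_forall_iff,
    Nat.forall_lt_succ_right, Nat.not_lt_zero, IsEmpty.forall_iff, implies_true, true_and,
    and_true, iff_true, List.getD_cons_zero, List.getD_cons_succ]
  omega

theorem avoids_and_avoids_iff : Avoids w σ ∧ Avoids w τ ↔
    ∀ t, t <+ w → ¬ (OrderIsoWord t σ ∨ OrderIsoWord t τ) := by
  simp only [Avoids, Contains]
  grind

theorem avoids_132_and_312_iff :
    Avoids w [1, 3, 2] ∧ Avoids w [3, 1, 2] ↔ Avoids132And312 w := by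
  rw [avoids_and_avoids_iff, Avoids132And312, triplewise_iff_forall_sublist]
  refine ⟨fun h a b c hw hc ↦ h _ hw (orderIsoWord_132_or_312_iff.2 hc), fun h t ht hor ↦ ?_⟩
  obtain ⟨a, b, c, rfl⟩ := List.length_eq_three.1 (hor.elim And.left And.left)
  exact h a b c ht (orderIsoWord_132_or_312_iff.1 hor)

theorem avoids_1221_and_2112_iff :
    Avoids w [1, 2, 2, 1] ∧ Avoids w [2, 1, 1, 2] ↔ Nonnesting w := by
  rw [avoids_and_avoids_iff]
  constructor
  · intro h a b hw
    by_contra hab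
    exact h _ hw (orderIsoWord_1221_or_2112_iff.2 ⟨hab, rfl, rfl⟩)
  · intro h t ht hor
    match t, (hor.elim And.left And.left : t.length = 4) with
    | [a, b, c, d], _ =>
      obtain ⟨hab, rfl, rfl⟩ := orderIsoWord_1221_or_2112_iff.1 hor
      exact hab (h ht)

theorem isNonnesting_and_avoids_iff {n : ℕ} :
    IsNonnesting n w ∧ Avoids w [1, 3, 2] ∧ Avoids w [3, 1, 2] ↔
      IsDoubledPerm (Finset.Icc 1 n) w ∧ Nonnesting w ∧ Avoids132And312 w := by
  rw [IsNonnesting, isMultisetPerm_iff, avoids_1221_and_2112_iff, avoids_132_and_312_iff,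
    and_assoc]

end Patterns

theorem nonnesting_avoid_132_312 (n : ℕ) (hn : 2 ≤ n) :
    {w : List ℕ | IsNonnesting n w ∧ Avoids w [1,3,2] ∧ Avoids w [3,1,2]}.ncard =
      4 * 3 ^ (n - 2) := by
  simp only [isNonnesting_and_avoids_iff]
  simpa using nonnesting_avoid_132_312_general (Finset.Icc 1 n) (by simpa using hn)
end

section
/- For all n ≥ 2, the number of nonnesting permutations of the multiset {1,1,2,2,…,n,n} that avoid both patterns 123 and 213 equals 4·3^(n−2). -/
/-! Delete the two copies of the largest letter `N` from such a word. Avoiding `123` and `213`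
forces all letters before the second `N` to be equal, and the nonnesting condition then leaves only
the initial segments `NN`, `NaN`, `aNaN` and `aaNN` up to the second `N`. Conversely each of these
insertions is legal, the last two whenever the smaller word starts with a double letter `aa`. So a
nonempty word extends in `4` ways if it starts with a double letter and in `2` ways otherwise, and
in both cases exactly half of the extensions start with a double letter. Hence from `n = 2` on half
of all words start with a double letter, and each further step multiplies their number by
`(4 + 2) / 2 = 3`. -/

lemma orderIsoWord_iff_exists_map {t σ : List ℕ} :
    OrderIsoWord t σ ↔ ∃ f : ℕ → ℕ, StrictMonoOn f {x | x ∈ σ} ∧ t = σ.map f := by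
  constructor
  · rintro ⟨hlen, hiso⟩
    refine ⟨fun x => t.getD (σ.idxOf x) 0, fun x hx y hy hxy => ?_, ?_⟩
    · have hx' := List.idxOf_lt_length_iff.2 hx
      have hy' := List.idxOf_lt_length_iff.2 hy
      refine (hiso _ _ hx' hy').1.2 ?_
      simpa [hx', hy'] using hxy
    · refine List.ext_getElem (by simpa using hlen) fun i hi hi' => ?_
      have hiσ : i < σ.length := hlen ▸ hi
      have hidx : σ.idxOf σ[i] < σ.length := List.idxOf_lt_length_iff.2 (List.getElem_mem hiσ)
      have hget := (hiso i _ hiσ hidx).2.2 (by simp [hiσ, hidx])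
      simpa [hi] using hget
  · rintro ⟨f, hf, rfl⟩
    refine ⟨List.length_map f, fun r s hr hs => ?_⟩
    have hr' : σ[r] ∈ {x | x ∈ σ} := List.getElem_mem hr
    have hs' : σ[s] ∈ {x | x ∈ σ} := List.getElem_mem hs
    simp [hr, hs, hf.lt_iff_lt hr' hs', hf.injOn.eq_iff hr' hs']

lemma avoids_iff_forall_map {w σ : List ℕ} :
    Avoids w σ ↔ ∀ f : ℕ → ℕ, StrictMonoOn f {x | x ∈ σ} → ¬ (σ.map f).Sublist w := by
  simp only [Avoids, Contains, orderIsoWord_iff_exists_map]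
  grind

lemma Avoids.of_sublist {v w σ : List ℕ} (hw : Avoids w σ) (hvw : v.Sublist w) : Avoids v σ :=
  fun ⟨t, htv, ht⟩ => hw ⟨t, htv.trans hvw, ht⟩

section DeleteLetter

variable {α : Type*} [DecidableEq α] {N : α}

lemma filter_ne_eq_self {s : List α} (hs : N ∉ s) : s.filter (· ≠ N) = s :=
  List.filter_eq_self.2 (by grind)

lemma sublist_filter_ne {s w : List α} (hs : N ∉ s) (hsw : s.Sublist w) :
    s.Sublist (w.filter (· ≠ N)) :=
  filter_ne_eq_self hs ▸ hsw.filter _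

end DeleteLetter

lemma avoids_iff_avoids_filter_ne {w σ : List ℕ} {m N : ℕ} (hm : m ∈ σ) (hσ : ∀ x ∈ σ, x ≤ m)
    (hw : ∀ x ∈ w, x ≤ N) :
    Avoids w σ ↔ Avoids (w.filter (· ≠ N)) σ ∧
      ∀ f : ℕ → ℕ, StrictMonoOn f {x | x ∈ σ} → f m = N → ¬ (σ.map f).Sublist w := by
  constructor
  · intro h
    exact ⟨h.of_sublist List.filter_sublist, fun f hf _ => avoids_iff_forall_map.1 h f hf⟩
  · rintro ⟨hfilter, htop⟩
    refine avoids_iff_forall_map.2 fun f hf hsub => ?_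
    by_cases hfm : f m = N
    · exact htop f hf hfm hsub
    · have hfm_lt : f m < N :=
        lt_of_le_of_ne (hw _ (hsub.subset (List.mem_map_of_mem hm))) hfm
      have hN : N ∉ σ.map f := by
        intro hmem
        obtain ⟨x, hx, rfl⟩ := List.mem_map.1 hmem
        exact hfm_lt.not_ge (hf.monotoneOn hx hm (hσ x hx))
      exact avoids_iff_forall_map.1 hfilter f hf (sublist_filter_ne hN hsub)

lemma avoids_iff_of_mem_iff_one_two {w σ : List ℕ} {N : ℕ}
    (hσ : ∀ x, x ∈ σ ↔ x = 1 ∨ x = 2) (hw : ∀ x ∈ w, x ≤ N) :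
    Avoids w σ ↔ Avoids (w.filter (· ≠ N)) σ ∧
      ∀ a < N, ¬ (σ.map fun x => if x = 1 then a else N).Sublist w := by
  rw [avoids_iff_avoids_filter_ne (m := 2) (by simp [hσ]) (by grind) hw, and_congr_right_iff]
  refine fun _ => ⟨fun h a ha => h _ (by simp [hσ, StrictMonoOn, ha]) (by simp), ?_⟩
  intro h f hf hfN
  have hf12 : f 1 < N := hfN ▸ hf (by simp [hσ]) (by simp [hσ]) one_lt_two
  have hmap : σ.map f = σ.map fun x => if x = 1 then f 1 else N :=
    List.map_congr_left (by grind)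
  exact hmap ▸ h (f 1) hf12

lemma avoids_iff_of_mem_iff_one_two_three {w σ : List ℕ} {N : ℕ}
    (hσ : ∀ x, x ∈ σ ↔ x = 1 ∨ x = 2 ∨ x = 3) (hw : ∀ x ∈ w, x ≤ N) :
    Avoids w σ ↔ Avoids (w.filter (· ≠ N)) σ ∧ ∀ a b, a < b → b < N →
      ¬ (σ.map fun x => if x = 1 then a else if x = 2 then b else N).Sublist w := by
  rw [avoids_iff_avoids_filter_ne (m := 3) (by simp [hσ]) (by grind) hw, and_congr_right_iff]
  refine fun _ => ⟨fun h a b hab hb => h _ ?_ (by simp), fun h f hf hfN => ?_⟩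
  · simp [hσ, StrictMonoOn, hab, hb, hab.trans hb]
  · have hf12 : f 1 < f 2 := hf (by simp [hσ]) (by simp [hσ]) (by simp)
    have hf23 : f 2 < N := hfN ▸ hf (by simp [hσ]) (by simp [hσ]) (by simp)
    have hmap : σ.map f = σ.map fun x => if x = 1 then f 1 else if x = 2 then f 2 else N :=
      List.map_congr_left (by grind)
    exact hmap ▸ h (f 1) (f 2) hf12 hf23

section Sublists

variable {α : Type*} [DecidableEq α] {N : α}

lemma sublist_left_of_append_cons {l l' u t : List α} (hcount : t.count N ≤ l'.count N)
    (h : (l ++ N :: l').Sublist (u ++ N :: t)) : l.Sublist u := by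
  obtain ⟨r, r', hr, hl, hl'⟩ := List.append_sublist_iff.1 h
  obtain ⟨c, rfl, hc⟩ | ⟨c, rfl, -⟩ := List.append_eq_append_iff.1 hr
  · cases c with
    | nil => simpa using hl
    | cons x c =>
      obtain ⟨rfl, rfl⟩ : N = x ∧ t = c ++ r' := by simpa using hc
      have hlt := hl'.count_le N
      simp only [List.count_cons_self, List.count_append] at hlt hcount
      omega
  · exact hl.trans (List.sublist_append_left _ _)

lemma sublist_right_of_append_cons {l l' u t : List α} (hcount : u.count N ≤ l.count N)
    (h : (l ++ N :: l').Sublist (u ++ N :: t)) : l'.Sublist t :=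
  List.reverse_sublist.1 <| sublist_left_of_append_cons (N := N) (l' := l.reverse) (t := u.reverse)
    (by simpa using hcount) (by simpa using h.reverse)

end Sublists

/-- `TopAvoids N w` says that no occurrence of `1221`, `2112`, `123` or `213` in `w` uses `N` as its
largest letter. It is stated for words whose largest letter is `N`, so that only equality of letters
matters; the patterns `123` and `213` are then treated together. -/
structure TopAvoids {α : Type*} (N : α) (w : List α) : Prop where
  not_sublist_outer : ∀ a ≠ N, ¬ [a, N, N, a].Sublist w
  not_sublist_inner : ∀ a ≠ N, ¬ [N, a, a, N].Sublist w
  eq_of_sublist : ∀ a b, a ≠ N → b ≠ N → [a, b, N].Sublist w → a = b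

/-- The nonnesting permutations of `{1,1,2,2,…,n,n}` that avoid `123` and `213`. -/
def IsAvoider (n : ℕ) (w : List ℕ) : Prop :=
  IsNonnesting n w ∧ Avoids w [1, 2, 3] ∧ Avoids w [2, 1, 3]

lemma IsMultisetPerm.mem_iff {n : ℕ} {w : List ℕ} (h : IsMultisetPerm n w) {x : ℕ} :
    x ∈ w ↔ 1 ≤ x ∧ x ≤ n := by
  rw [← List.count_pos_iff, h x]
  split_ifs <;> simp_all

lemma IsMultisetPerm.count_eq_two {n : ℕ} {w : List ℕ} (h : IsMultisetPerm n w) {x : ℕ}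
    (hx : x ∈ w) : w.count x = 2 := by
  rw [h x, if_pos (h.mem_iff.1 hx)]

lemma isMultisetPerm_zero_iff {w : List ℕ} : IsMultisetPerm 0 w ↔ w = [] := by
  refine ⟨fun h => List.eq_nil_iff_forall_not_mem.2 fun x hx => ?_, ?_⟩
  · have := h.mem_iff.1 hx
    omega
  · rintro rfl i
    rw [List.count_nil, if_neg (by omega)]

lemma isMultisetPerm_succ_iff {n : ℕ} {w : List ℕ} :
    IsMultisetPerm (n + 1) w ↔
      w.count (n + 1) = 2 ∧ IsMultisetPerm n (w.filter (· ≠ n + 1)) := by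
  have hcount (i : ℕ) :
      (w.filter (· ≠ n + 1)).count i = if i = n + 1 then 0 else w.count i := by
    split_ifs with hi
    · simp [List.count_eq_zero, hi]
    · exact List.count_filter (by simpa using hi)
  simp only [IsMultisetPerm, hcount]
  constructor
  · intro h
    exact ⟨by simp [h], fun i => by grind⟩
  · rintro ⟨htop, h⟩ i
    grind

lemma avoids_patterns_iff_topAvoids {w : List ℕ} {N : ℕ} (hw : ∀ x ∈ w, x ≤ N) :
    (Avoids w [1, 2, 2, 1] ∧ Avoids w [2, 1, 1, 2]) ∧ Avoids w [1, 2, 3] ∧ Avoids w [2, 1, 3] ↔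
      ((Avoids (w.filter (· ≠ N)) [1, 2, 2, 1] ∧ Avoids (w.filter (· ≠ N)) [2, 1, 1, 2]) ∧
        Avoids (w.filter (· ≠ N)) [1, 2, 3] ∧ Avoids (w.filter (· ≠ N)) [2, 1, 3]) ∧
      TopAvoids N w := by
  have hlt {s : List ℕ} {a : ℕ} (hs : s.Sublist w) (ha : a ∈ s) (haN : a ≠ N) : a < N :=
    lt_of_le_of_ne (hw a (hs.subset ha)) haN
  rw [avoids_iff_of_mem_iff_one_two (σ := [1, 2, 2, 1]) (by grind) hw,
    avoids_iff_of_mem_iff_one_two (σ := [2, 1, 1, 2]) (by grind) hw,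
    avoids_iff_of_mem_iff_one_two_three (σ := [1, 2, 3]) (by grind) hw,
    avoids_iff_of_mem_iff_one_two_three (σ := [2, 1, 3]) (by grind) hw]
  simp only [List.map_cons, List.map_nil, if_true, OfNat.ofNat_ne_one, if_false,
    show (3 : ℕ) ≠ 2 by simp]
  constructor
  · rintro ⟨⟨⟨h1221, t1221⟩, h2112, t2112⟩, ⟨h123, t123⟩, h213, t213⟩
    refine ⟨⟨⟨h1221, h2112⟩, h123, h213⟩, fun a ha hs => ?_, fun a ha hs => ?_,
      fun a b ha hb hs => ?_⟩
    · exact t1221 a (hlt hs (by simp) ha) hs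
    · exact t2112 a (hlt hs (by simp) ha) hs
    · by_contra hab
      rcases lt_or_gt_of_ne hab with hab | hba
      · exact t123 a b hab (hlt hs (by simp) hb) hs
      · exact t213 b a hba (hlt hs (by simp) ha) hs
  · rintro ⟨⟨⟨h1221, h2112⟩, h123, h213⟩, ht⟩
    refine ⟨⟨⟨h1221, fun a ha => ht.1 a ha.ne⟩, h2112, fun a ha => ht.2 a ha.ne⟩,
      ⟨h123, fun a b hab hb hs => ?_⟩, h213, fun a b hab hb hs => ?_⟩
    · exact hab.ne (ht.eq_of_sublist a b (hab.trans hb).ne hb.ne hs)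
    · exact hab.ne' (ht.eq_of_sublist b a hb.ne (hab.trans hb).ne hs)

lemma isAvoider_succ_iff {n : ℕ} {w : List ℕ} :
    IsAvoider (n + 1) w ↔
      w.count (n + 1) = 2 ∧ IsAvoider n (w.filter (· ≠ n + 1)) ∧ TopAvoids (n + 1) w := by
  have hpatterns (h : IsMultisetPerm (n + 1) w) :=
    avoids_patterns_iff_topAvoids (w := w) fun x hx => (h.mem_iff.1 hx).2
  have hperm := isMultisetPerm_succ_iff (n := n) (w := w)
  simp only [IsAvoider, IsNonnesting]
  tauto

section TopPrefix

variable {α : Type*} {N : α}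

lemma outer_sublist_append_cons_iff {u₁ u₂ t : List α} {a : α} (hu₁ : N ∉ u₁) (hu₂ : N ∉ u₂)
    (ht : N ∉ t) :
    [a, N, N, a].Sublist (u₁ ++ N :: (u₂ ++ N :: t)) ↔ a ∈ u₁ ∧ a ∈ t := by
  classical
  have hcount₁ : u₁.count N = 0 := List.count_eq_zero.2 hu₁
  have hcount₂ : u₂.count N = 0 := List.count_eq_zero.2 hu₂
  have hcount : t.count N = 0 := List.count_eq_zero.2 ht
  constructor
  · intro hs
    have ha₁ : [a].Sublist u₁ :=
      sublist_left_of_append_cons (l' := [N, a]) (by simp [hcount₂, hcount]) hs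
    have hNa : [N, a].Sublist (u₂ ++ N :: t) :=
      sublist_right_of_append_cons (l := [a]) (by simp [hcount₁]) hs
    have hat : [a].Sublist t :=
      sublist_right_of_append_cons (l := []) (by simp [hcount₂]) hNa
    exact ⟨List.singleton_sublist.1 ha₁, List.singleton_sublist.1 hat⟩
  · rintro ⟨ha₁, hat⟩
    have hNa : [N, a].Sublist (u₂ ++ N :: t) :=
      ((List.singleton_sublist.2 hat).cons_cons N).trans (List.sublist_append_right _ _)
    exact (List.singleton_sublist.2 ha₁).append (hNa.cons_cons N)

lemma inner_sublist_append_cons_iff {u₁ u₂ t : List α} {a : α} (hu₁ : N ∉ u₁) (ht : N ∉ t) :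
    [N, a, a, N].Sublist (u₁ ++ N :: (u₂ ++ N :: t)) ↔ [a, a].Sublist u₂ := by
  classical
  constructor
  · intro hs
    have haaN : [a, a, N].Sublist (u₂ ++ N :: t) :=
      sublist_right_of_append_cons (l := []) (by simp [List.count_eq_zero.2 hu₁]) hs
    exact sublist_left_of_append_cons (l' := []) (by simp [List.count_eq_zero.2 ht]) haaN
  · intro haa
    have haaN : [a, a, N].Sublist (u₂ ++ N :: t) := haa.append (List.nil_sublist t |>.cons_cons N)
    exact (haaN.cons_cons N).trans (List.sublist_append_right _ _)

lemma cons_cons_sublist_append_cons_iff {u₁ u₂ t : List α} {a b : α} (ha : a ≠ N) (hb : b ≠ N)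
    (hu₁ : N ∉ u₁) (hu₂ : N ∉ u₂) (ht : N ∉ t) :
    [a, b, N].Sublist (u₁ ++ N :: (u₂ ++ N :: t)) ↔ [a, b].Sublist (u₁ ++ u₂) := by
  classical
  have hassoc : u₁ ++ N :: (u₂ ++ N :: t) = (u₁ ++ N :: u₂) ++ N :: t := by simp
  rw [hassoc]
  constructor
  · intro hs
    have hab : [a, b].Sublist (u₁ ++ N :: u₂) :=
      sublist_left_of_append_cons (l' := []) (by simp [List.count_eq_zero.2 ht]) hs
    have hfilter : (u₁ ++ N :: u₂).filter (· ≠ N) = u₁ ++ u₂ := by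
      rw [List.filter_append, List.filter_cons_of_neg (by simp), filter_ne_eq_self hu₁,
        filter_ne_eq_self hu₂]
    exact hfilter ▸ sublist_filter_ne (by simp [ha.symm, hb.symm]) hab
  · intro hab
    have hab' : [a, b].Sublist (u₁ ++ N :: u₂) :=
      hab.trans ((List.sublist_cons_self N u₂).append_left u₁)
    exact hab'.append (List.nil_sublist t |>.cons_cons N)

lemma topAvoids_append_cons_iff {u₁ u₂ t : List α} (hu₁ : N ∉ u₁) (hu₂ : N ∉ u₂) (ht : N ∉ t) :
    TopAvoids N (u₁ ++ N :: (u₂ ++ N :: t)) ↔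
      (u₁ ++ u₂).Pairwise (· = ·) ∧ u₁.Disjoint t ∧ u₂.Nodup := by
  have hpair {a b : α} (ha : a ≠ N) (hb : b ≠ N) :=
    cons_cons_sublist_append_cons_iff ha hb hu₁ hu₂ ht
  constructor
  · intro h
    refine ⟨List.pairwise_iff_forall_sublist.2 fun {a b} hab => ?_, fun a ha hat => ?_,
      List.nodup_iff_sublist.2 fun a haa => ?_⟩
    · have hmem : a ∈ u₁ ++ u₂ ∧ b ∈ u₁ ++ u₂ := by simpa using hab.subset
      have ha : a ≠ N := by grind
      have hb : b ≠ N := by grind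
      exact h.eq_of_sublist a b ha hb ((hpair ha hb).2 hab)
    · exact h.not_sublist_outer a (ne_of_mem_of_not_mem ha hu₁)
        ((outer_sublist_append_cons_iff hu₁ hu₂ ht).2 ⟨ha, hat⟩)
    · exact h.not_sublist_inner a (ne_of_mem_of_not_mem (haa.subset (by simp)) hu₂)
        ((inner_sublist_append_cons_iff hu₁ ht).2 haa)
  · rintro ⟨hconst, hdisj, hnodup⟩
    refine ⟨fun a _ hs => ?_, fun a _ hs => ?_, fun a b ha hb hs => ?_⟩
    · obtain ⟨ha, hat⟩ := (outer_sublist_append_cons_iff hu₁ hu₂ ht).1 hs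
      exact hdisj ha hat
    · exact List.nodup_iff_sublist.1 hnodup a ((inner_sublist_append_cons_iff hu₁ ht).1 hs)
    · exact List.pairwise_iff_forall_sublist.1 hconst ((hpair ha hb).1 hs)

/-- The pairs `(u₁, u₂)` for which two copies of a new largest letter `N` may be inserted into a
word `u₁ ++ u₂ ++ t`, giving `u₁ N u₂ N t`. -/
inductive IsTopPrefix : List α → List α → Prop
  | adjacent : IsTopPrefix [] []
  | around (a : α) : IsTopPrefix [] [a]
  | alternating (a : α) : IsTopPrefix [a] [a]
  | after (a : α) : IsTopPrefix [a, a] []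

end TopPrefix

section TopInsertions

variable {α : Type*} [DecidableEq α] {N : α}

lemma exists_eq_append_cons_of_count_eq_two {w : List α} (h : w.count N = 2) :
    ∃ u₁ u₂ t, w = u₁ ++ N :: (u₂ ++ N :: t) ∧ N ∉ u₁ ∧ N ∉ u₂ ∧ N ∉ t := by
  have hw : N ∈ w := List.count_pos_iff.1 (by omega)
  obtain ⟨u₁, s, rfl, hu₁⟩ := List.eq_append_cons_of_mem hw
  have hcount : s.count N = 1 := by simpa [List.count_eq_zero.2 hu₁] using h
  have hs : N ∈ s := List.count_pos_iff.1 (by omega)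
  obtain ⟨u₂, t, rfl, hu₂⟩ := List.eq_append_cons_of_mem hs
  have ht : t.count N = 0 := by simpa [List.count_eq_zero.2 hu₂] using hcount
  exact ⟨u₁, u₂, t, rfl, hu₁, hu₂, List.count_eq_zero.1 ht⟩

lemma isTopPrefix_iff {u₁ u₂ t : List α}
    (hcount : ∀ a ∈ u₁ ++ (u₂ ++ t), (u₁ ++ (u₂ ++ t)).count a = 2) :
    IsTopPrefix u₁ u₂ ↔ (u₁ ++ u₂).Pairwise (· = ·) ∧ u₁.Disjoint t ∧ u₂.Nodup := by
  constructor
  · rintro (_ | a | a | a)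
    · simp
    · simp
    · have hat : a ∉ t := by simpa [List.count_eq_zero] using hcount a
      simpa using hat
    · have hat : a ∉ t := by simpa [List.count_eq_zero] using hcount a
      simpa using hat
  · rintro ⟨hconst, hdisj, hnodup⟩
    have hlen : (u₁ ++ u₂).length ≤ 2 := by
      match h : u₁ ++ u₂ with
      | [] | [_] | [_, _] => simp
      | a :: b :: c :: _ =>
        obtain ⟨rfl, rfl⟩ : a = b ∧ a = c := by grind
        have ha := hcount a
        rw [← List.append_assoc, h] at ha
        simp at ha
    match u₁, u₂ with
    | [], [] => exact .adjacent
    | [], [a] => exact .around a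
    | [], [a, b] => grind
    | [a], [] =>
      have hat : a ∉ t := by simpa using hdisj
      simpa [List.count_eq_zero.2 hat] using hcount a
    | [a], [b] =>
      obtain rfl : a = b := by simpa using hconst
      exact .alternating a
    | [a, b], [] =>
      obtain rfl : a = b := by simpa using hconst
      exact .after a

lemma topAvoids_iff_isTopPrefix {u₁ u₂ t : List α} (hN : N ∉ u₁ ++ (u₂ ++ t))
    (hcount : ∀ a ∈ u₁ ++ (u₂ ++ t), (u₁ ++ (u₂ ++ t)).count a = 2) :
    TopAvoids N (u₁ ++ N :: (u₂ ++ N :: t)) ↔ IsTopPrefix u₁ u₂ := by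
  obtain ⟨hu₁, hu₂, ht⟩ : N ∉ u₁ ∧ N ∉ u₂ ∧ N ∉ t := by simpa using hN
  rw [isTopPrefix_iff hcount, topAvoids_append_cons_iff hu₁ hu₂ ht]

/-- The words obtained from `v` by inserting two copies of `N` at places allowed by
`IsTopPrefix`. -/
def topInsertions (N : α) : List α → Finset (List α)
  | [] => {[N, N]}
  | [a] => {[N, N, a], [N, a, N]}
  | a :: b :: t =>
    {N :: N :: a :: b :: t, N :: a :: N :: b :: t} ∪
      if a = b then {a :: a :: N :: N :: t, a :: N :: a :: N :: t} else ∅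

lemma mem_topInsertions_iff_exists {v w : List α} :
    w ∈ topInsertions N v ↔ ∃ u₁ u₂ t,
      v = u₁ ++ (u₂ ++ t) ∧ w = u₁ ++ N :: (u₂ ++ N :: t) ∧ IsTopPrefix u₁ u₂ := by
  constructor
  · intro hw
    match v with
    | [] => exact ⟨[], [], [], by simpa [topInsertions, IsTopPrefix.adjacent] using hw⟩
    | [a] =>
      obtain rfl | rfl : w = [N, N, a] ∨ w = [N, a, N] := by simpa [topInsertions] using hw
      · exact ⟨[], [], [a], rfl, rfl, .adjacent⟩
      · exact ⟨[], [a], [], rfl, rfl, .around a⟩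
    | a :: b :: t =>
      obtain rfl | rfl | ⟨rfl, rfl | rfl⟩ : w = N :: N :: a :: b :: t ∨ w = N :: a :: N :: b :: t ∨
          a = b ∧ (w = a :: a :: N :: N :: t ∨ w = a :: N :: a :: N :: t) := by
        grind [topInsertions]
      · exact ⟨[], [], a :: b :: t, rfl, rfl, .adjacent⟩
      · exact ⟨[], [a], b :: t, rfl, rfl, .around a⟩
      · exact ⟨[a, a], [], t, rfl, rfl, .after a⟩
      · exact ⟨[a], [a], t, rfl, rfl, .alternating a⟩
  · rintro ⟨u₁, u₂, t, rfl, rfl, _ | a | a | a⟩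
    · match t with
      | [] | [_] | _ :: _ :: _ => simp [topInsertions]
    · match t with
      | [] | _ :: _ => simp [topInsertions]
    · simp [topInsertions]
    · simp [topInsertions]

lemma filter_ne_append_cons {u₁ u₂ t : List α} (hN : N ∉ u₁ ++ (u₂ ++ t)) :
    (u₁ ++ N :: (u₂ ++ N :: t)).filter (· ≠ N) = u₁ ++ (u₂ ++ t) := by
  simpa [List.filter_cons_of_neg] using filter_ne_eq_self hN

lemma mem_topInsertions_iff {v w : List α} (hN : N ∉ v) (hv : ∀ a ∈ v, v.count a = 2) :
    w ∈ topInsertions N v ↔ w.count N = 2 ∧ w.filter (· ≠ N) = v ∧ TopAvoids N w := by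
  rw [mem_topInsertions_iff_exists]
  constructor
  · rintro ⟨u₁, u₂, t, rfl, rfl, h⟩
    refine ⟨?_, filter_ne_append_cons hN, (topAvoids_iff_isTopPrefix hN hv).2 h⟩
    have hcount : (u₁ ++ (u₂ ++ t)).count N = 0 := List.count_eq_zero.2 hN
    simp only [List.count_append, List.count_cons_self] at hcount ⊢
    omega
  · rintro ⟨hcount, rfl, h⟩
    obtain ⟨u₁, u₂, t, rfl, hu₁, hu₂, ht⟩ := exists_eq_append_cons_of_count_eq_two hcount
    have hfilter := filter_ne_append_cons (u₁ := u₁) (u₂ := u₂) (t := t) (N := N) (by simp [*])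
    rw [hfilter] at hN hv ⊢
    exact ⟨u₁, u₂, t, rfl, rfl, (topAvoids_iff_isTopPrefix hN hv).1 h⟩

/-- Whether the first two letters of a word exist and are equal, the case in which two additional
insertions are possible. -/
def startsDouble : List α → Bool
  | a :: b :: _ => a = b
  | _ => false

lemma card_topInsertions {v : List α} (hN : N ∉ v) (hv : 2 ≤ v.length) :
    (topInsertions N v).card = if startsDouble v then 4 else 2 := by
  match v with
  | a :: b :: t =>
    have ha : N ≠ a := by grind
    by_cases hab : a = b
    · subst hab
      simp [topInsertions, startsDouble, ha, ha.symm, Finset.card_insert_of_notMem]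
    · simp [topInsertions, startsDouble, hab, ha]

lemma card_filter_startsDouble_topInsertions {v : List α} (hN : N ∉ v) (hv : 2 ≤ v.length) :
    ((topInsertions N v).filter (startsDouble ·)).card = if startsDouble v then 2 else 1 := by
  match v with
  | a :: b :: t =>
    have ha : N ≠ a := by grind
    by_cases hab : a = b
    · subst hab
      simp [topInsertions, startsDouble, Finset.filter_insert, Finset.filter_singleton, ha,
        ha.symm]
    · simp [topInsertions, startsDouble, Finset.filter_insert, Finset.filter_singleton, hab, ha]

end TopInsertions

/-- The finite set of words satisfying `IsAvoider n`, see `mem_avoiders_iff`, generated by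
successive insertion of the largest letter. -/
def avoiders : ℕ → Finset (List ℕ)
  | 0 => {[]}
  | n + 1 => (avoiders n).biUnion (topInsertions (n + 1))

lemma isAvoider_zero_iff {w : List ℕ} : IsAvoider 0 w ↔ w = [] := by
  constructor
  · exact fun h => isMultisetPerm_zero_iff.1 h.1.1
  · rintro rfl
    simp [IsAvoider, IsNonnesting, isMultisetPerm_zero_iff, avoids_iff_forall_map]

lemma IsAvoider.mem_topInsertions_succ_iff {n : ℕ} {v w : List ℕ} (hv : IsAvoider n v) :
    w ∈ topInsertions (n + 1) v ↔
      w.count (n + 1) = 2 ∧ w.filter (· ≠ n + 1) = v ∧ TopAvoids (n + 1) w :=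
  mem_topInsertions_iff (by simp [hv.1.1.mem_iff]) fun _ => hv.1.1.count_eq_two

lemma mem_avoiders_iff {n : ℕ} {w : List ℕ} : w ∈ avoiders n ↔ IsAvoider n w := by
  induction n generalizing w with
  | zero => simp [avoiders, isAvoider_zero_iff]
  | succ n ih =>
    simp only [avoiders, Finset.mem_biUnion, ih, isAvoider_succ_iff]
    constructor
    · rintro ⟨v, hv, hw⟩
      obtain ⟨hcount, rfl, htop⟩ := hv.mem_topInsertions_succ_iff.1 hw
      exact ⟨hcount, hv, htop⟩
    · rintro ⟨hcount, hv, htop⟩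
      exact ⟨_, hv, hv.mem_topInsertions_succ_iff.2 ⟨hcount, rfl, htop⟩⟩

lemma pairwiseDisjoint_topInsertions (n : ℕ) :
    (avoiders n : Set (List ℕ)).PairwiseDisjoint (topInsertions (n + 1)) := by
  refine fun v hv v' hv' hne => Finset.disjoint_left.2 fun w hw hw' => hne ?_
  have hv := ((mem_avoiders_iff.1 hv).mem_topInsertions_succ_iff.1 hw).2.1
  have hv' := ((mem_avoiders_iff.1 hv').mem_topInsertions_succ_iff.1 hw').2.1
  exact hv.symm.trans hv'

lemma succ_notMem_of_mem_avoiders {n : ℕ} {v : List ℕ} (hv : v ∈ avoiders n) : n + 1 ∉ v := by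
  simp [(mem_avoiders_iff.1 hv).1.1.mem_iff]

lemma two_le_length_of_mem_avoiders_succ {n : ℕ} {v : List ℕ} (hv : v ∈ avoiders (n + 1)) :
    2 ≤ v.length := by
  have hcount : v.count (n + 1) = 2 := (isAvoider_succ_iff.1 (mem_avoiders_iff.1 hv)).1
  exact hcount ▸ List.count_le_length

lemma card_filter_startsDouble_avoiders_add_two (n : ℕ) :
    ((avoiders (n + 2)).filter (startsDouble ·)).card =
      (avoiders (n + 1)).card + ((avoiders (n + 1)).filter (startsDouble ·)).card := by
  have hdisj := pairwiseDisjoint_topInsertions (n + 1)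
  rw [avoiders, Finset.filter_biUnion, Finset.card_biUnion fun v hv v' hv' hne =>
    (hdisj hv hv' hne).mono (Finset.filter_subset _ _) (Finset.filter_subset _ _),
    Finset.card_filter, Finset.card_eq_sum_ones, ← Finset.sum_add_distrib]
  refine Finset.sum_congr rfl fun v hv => ?_
  rw [card_filter_startsDouble_topInsertions (succ_notMem_of_mem_avoiders hv)
    (two_le_length_of_mem_avoiders_succ hv)]
  split_ifs <;> rfl

lemma card_avoiders_eq_two_mul_card_filter (n : ℕ) :
    (avoiders (n + 2)).card = 2 * ((avoiders (n + 2)).filter (startsDouble ·)).card := by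
  rw [card_filter_startsDouble_avoiders_add_two, avoiders,
    Finset.card_biUnion (pairwiseDisjoint_topInsertions (n + 1)),
    Finset.card_filter, Finset.card_eq_sum_ones, ← Finset.sum_add_distrib, Finset.mul_sum]
  refine Finset.sum_congr rfl fun v hv => ?_
  rw [card_topInsertions (succ_notMem_of_mem_avoiders hv) (two_le_length_of_mem_avoiders_succ hv)]
  split_ifs <;> rfl

lemma card_avoiders_add_three (n : ℕ) :
    (avoiders (n + 3)).card = 3 * (avoiders (n + 2)).card := by
  have hhalf := card_avoiders_eq_two_mul_card_filter n
  calc (avoiders (n + 3)).card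
    _ = 2 * ((avoiders (n + 3)).filter (startsDouble ·)).card :=
      card_avoiders_eq_two_mul_card_filter (n + 1)
    _ = 2 * ((avoiders (n + 2)).card + ((avoiders (n + 2)).filter (startsDouble ·)).card) := by
      rw [card_filter_startsDouble_avoiders_add_two (n + 1)]
    _ = 3 * (avoiders (n + 2)).card := by omega

lemma card_avoiders_add_two (n : ℕ) : (avoiders (n + 2)).card = 4 * 3 ^ n := by
  induction n with
  | zero => decide
  | succ n ih => rw [card_avoiders_add_three, ih]; ring

theorem nonnesting_avoid_123_213 (n : ℕ) (hn : 2 ≤ n) :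
    {w : List ℕ | IsNonnesting n w ∧ Avoids w [1,2,3] ∧ Avoids w [2,1,3]}.ncard =
      4 * 3 ^ (n - 2) := by
  obtain ⟨m, rfl⟩ := Nat.exists_eq_add_of_le' hn
  have hset : {w : List ℕ | IsNonnesting (m + 2) w ∧ Avoids w [1, 2, 3] ∧ Avoids w [2, 1, 3]} =
      avoiders (m + 2) :=
    Set.ext fun w => mem_avoiders_iff.symm
  rw [hset, Set.ncard_coe_finset, card_avoiders_add_two, Nat.add_sub_cancel]
end

section
/- Let Σ be a set of permutations of {1,2,3} (patterns of length 3), and let Λ = {σ₁σ₂σ₂σ₃ : σ = σ₁σ₂σ₃ ∈ Σ} be the set of length-4 patterns obtained by duplicating the middle letter of each pattern in Σ. Then for all n ≥ 1, the number of nonnesting permutations of the multiset {1,1,2,2,…,n,n} avoiding every pattern in Λ equals s_n(Σ)·C_n, where s_n(Σ) is the number of permutations of {1,…,n} avoiding every pattern in Σ and C_n = binom(2n,n)/(n+1) is the nth Catalan number. -/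
/-- `p` is a permutation (word) of `{1,…,n}`: every value in `{1,…,n}`
occurs exactly once and no other value occurs. -/
def IsPermWord (n : ℕ) (p : List ℕ) : Prop :=
  ∀ i : ℕ, p.count i = if 1 ≤ i ∧ i ≤ n then 1 else 0

/-!
In a nonnesting word the second copies of the letters appear in the same order as the first copies.
Such a word is therefore a permutation `p` fed through a queue, the order of the insertions and
removals being an arbitrary Dyck word. If `p = p₁ ++ y :: p₂`, the letters read before the first `y`
are those of `p₁` and the letters read after the second `y` are those of `p₂`. Hence `xyyz` is a
subsequence of the word iff `xyz` is a subsequence of `p`, whatever the Dyck word.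
-/

open DyckStep
open scoped List

section Sublist

variable {α : Type*} [DecidableEq α] {y : α} {u v l₁ l₂ : List α}

-- The hypotheses leave only the displayed `y` on the right to match the displayed `y` on the left.
theorem append_cons_sublist_append_cons_iff (hl₁ : y ∉ l₁) (hl₂ : l₂.count y ≤ v.count y) :
    u ++ y :: v <+ l₁ ++ y :: l₂ ↔ u <+ l₁ ∧ v <+ l₂ := by
  refine ⟨fun h ↦ ?_, fun ⟨hu, hv⟩ ↦ hu.append (hv.cons_cons y)⟩
  have hcount : ¬ y :: v <+ l₂ := fun hv ↦ by have := hv.count_le y; grind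
  induction l₁ generalizing u with
  | nil => cases u with
    | nil => simpa using h
    | cons a u =>
      refine absurd ?_ hcount
      calc y :: v <+ u ++ y :: v := List.sublist_append_right ..
        _ <+ l₂ := h.tail
  | cons b l₁ ih =>
    replace ih {u} := @ih u (List.not_mem_of_not_mem_cons hl₁)
    cases u with
    | nil => grind
    | cons a u =>
      rcases List.cons_sublist_cons'.1 h with htail | ⟨rfl, htail⟩
      · exact (ih htail).imp_left (.cons b)
      · exact (ih htail).imp_left (.cons_cons a)

end Sublist

/-- The first-in-first-out process behind a nonnesting word: `QueueRun Q p d w` says that, from a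
queue `Q` and an input `p`, the steps `d` empty both while reading the word `w`, where `U` reads the
next letter of `p` and enqueues it, and `D` reads the front of the queue and dequeues it. -/
inductive QueueRun {α : Type*} : List α → List α → List DyckStep → List α → Prop
  | nil : QueueRun [] [] [] []
  | enqueue {Q p d w x} : QueueRun (Q ++ [x]) p d w → QueueRun Q (x :: p) (U :: d) (x :: w)
  | dequeue {Q p d w x} : QueueRun Q p d w → QueueRun (x :: Q) p (D :: d) (x :: w)

namespace QueueRun

variable {α : Type*} {Q p : List α} {d : List DyckStep} {w : List α}

theorem count_eq [DecidableEq α] (h : QueueRun Q p d w) (x : α) :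
    w.count x = Q.count x + 2 * p.count x := by
  induction h <;> grind

theorem mem_iff (h : QueueRun Q p d w) {x : α} : x ∈ w ↔ x ∈ Q ++ p := by
  induction h <;> grind

theorem count_U (h : QueueRun Q p d w) : d.count U = p.length := by
  induction h <;> grind

theorem count_D (h : QueueRun Q p d w) : d.count D = Q.length + p.length := by
  induction h <;> grind

theorem count_D_take_le (h : QueueRun Q p d w) (i : ℕ) :
    (d.take i).count D ≤ Q.length + (d.take i).count U := by
  induction h generalizing i with
  | nil => simp
  | enqueue _ ih => cases i with
    | zero => simp
    | succ i => have := ih i; grind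
  | dequeue _ ih => cases i with
    | zero => simp
    | succ i => have := ih i; grind

theorem exists_word : ∀ {d : List DyckStep} {Q p : List α}, d.count U = p.length →
    d.count D = Q.length + p.length →
    (∀ i, (d.take i).count D ≤ Q.length + (d.take i).count U) → ∃ w, QueueRun Q p d w
  | [], Q, p, hU, hD, _ => by
    obtain rfl : p = [] := List.eq_nil_of_length_eq_zero hU.symm
    obtain rfl : Q = [] := List.eq_nil_of_length_eq_zero hD.symm
    exact ⟨[], nil⟩
  | U :: d, Q, [], hU, _, _ => by simp at hU
  | U :: d, Q, x :: p, hU, hD, htake => by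
    obtain ⟨w, hw⟩ := exists_word (d := d) (Q := Q ++ [x]) (p := p) (by grind) (by grind)
      fun i ↦ by have := htake (i + 1); grind
    exact ⟨x :: w, hw.enqueue⟩
  | D :: d, [], p, _, _, htake => by simpa using htake 1
  | D :: d, x :: Q, p, hU, hD, htake => by
    obtain ⟨w, hw⟩ := exists_word (d := d) (Q := Q) (p := p) (by grind) (by grind)
      fun i ↦ by have := htake (i + 1); grind
    exact ⟨x :: w, hw.dequeue⟩

theorem word_unique (h : QueueRun Q p d w) {w' : List α} (h' : QueueRun Q p d w') : w = w' := by
  induction h generalizing w' with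
  | nil => cases h'; rfl
  | enqueue _ ih => cases h' with | enqueue h' => rw [ih h']
  | dequeue _ ih => cases h' with | dequeue h' => rw [ih h']

theorem input_steps_unique (h : QueueRun Q p d w) {p' : List α} {d' : List DyckStep}
    (h' : QueueRun Q p' d' w) (hp : (Q ++ p).Nodup) (hp' : (Q ++ p').Nodup) :
    p = p' ∧ d = d' := by
  induction h generalizing p' d' with
  | nil => cases h'; simp
  | enqueue _ ih => cases h' with
    | enqueue h' => have := ih h' (by simpa using hp) (by simpa using hp'); grind
    | dequeue => simp at hp
  | dequeue _ ih => cases h' with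
    | enqueue => simp at hp'
    | dequeue h' => have := ih h' hp.of_cons hp'.of_cons; grind

theorem exists_of_nonnesting [DecidableEq α] {w Q : List α} (hQ : Q.Nodup)
    (htwice : ∀ x ∈ Q ++ w, (Q ++ w).count x = 2)
    (hnest : ∀ a b, a ≠ b → ¬ [a, b, b, a] <+ Q ++ w) : ∃ p d, QueueRun Q p d w := by
  induction w generalizing Q with
  | nil =>
    obtain rfl : Q = [] := List.eq_nil_iff_forall_not_mem.2 fun x hx ↦ by
      have := htwice x (by simpa using hx)
      have := List.nodup_iff_count_le_one.1 hQ x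
      grind
    exact ⟨[], [], nil⟩
  | cons x w ih =>
    by_cases hx : x ∈ Q
    · obtain ⟨y, Q, rfl⟩ := List.exists_cons_of_ne_nil (List.ne_nil_of_mem hx)
      obtain ⟨hyQ, hQ'⟩ := List.nodup_cons.1 hQ
      have hsub : Q ++ w <+ y :: Q ++ x :: w :=
        (List.sublist_cons_self y Q).append (List.sublist_cons_self x w)
      obtain rfl : x = y := by
        -- Otherwise `x` is queued behind `y`, whose second copy is still to come: `yxxy` nests.
        by_contra hxy
        have hyw : y ∈ w := by
          have := htwice y (by simp)
          have := List.count_eq_zero.2 hyQ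
          grind
        have hxQ : x ∈ Q := by grind
        exact hnest y x (Ne.symm hxy) <| .cons_cons y <|
          (List.singleton_sublist.2 hxQ).append ((List.singleton_sublist.2 hyw).cons_cons x)
      obtain ⟨p, d, h⟩ := ih hQ'
        (fun z hz ↦ by have := htwice z (hsub.subset hz); have := htwice x; grind)
        fun a b hab hs ↦ hnest a b hab (hs.trans hsub)
      exact ⟨p, D :: d, h.dequeue⟩
    · obtain ⟨p, d, h⟩ := ih (Q := Q ++ [x]) (by grind)
        (by simpa using htwice) (by simpa using hnest)
      exact ⟨x :: p, U :: d, h.enqueue⟩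

theorem exists_split_at_enqueue {b : α} {p₁ p₂ : List α}
    (h : QueueRun Q (p₁ ++ b :: p₂) d w) :
    ∃ w₁ w' Q' d', w = w₁ ++ b :: w' ∧ p₁ ⊆ w₁ ∧ w₁ ⊆ Q ++ p₁ ∧
      QueueRun (Q' ++ [b]) p₂ d' w' := by
  generalize hp : p₁ ++ b :: p₂ = p at h
  induction h generalizing p₁ with
  | nil => simp at hp
  | @enqueue Q p d w x h ih => cases p₁ with
    | nil =>
      obtain ⟨rfl, rfl⟩ := List.cons_eq_cons.1 hp
      exact ⟨[], w, Q, d, by simp, by simp, by simp, h⟩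
    | cons a p₁ =>
      obtain ⟨rfl, hp'⟩ := List.cons_eq_cons.1 hp
      obtain ⟨w₁, w', Q', d', rfl, hpw, hwp, h'⟩ := ih hp'
      exact ⟨a :: w₁, w', Q', d', rfl, by grind, by grind, h'⟩
  | @dequeue Q p d w x h ih =>
    obtain ⟨w₁, w', Q', d', rfl, hpw, hwp, h'⟩ := ih hp
    exact ⟨x :: w₁, w', Q', d', rfl, by grind, by grind, h'⟩

theorem exists_split_at_dequeue {b : α} {Q₁ Q₂ : List α}
    (h : QueueRun (Q₁ ++ b :: Q₂) p d w) :
    ∃ w₁ w₂, w = w₁ ++ b :: w₂ ∧ ∀ x, x ∈ w₂ ↔ x ∈ Q₂ ++ p := by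
  generalize hQ : Q₁ ++ b :: Q₂ = Q at h
  induction h generalizing Q₁ Q₂ with
  | nil => simp at hQ
  | @enqueue Q p d w x h ih =>
    obtain ⟨w₁, w₂, rfl, hw₂⟩ := ih (Q₁ := Q₁) (Q₂ := Q₂ ++ [x]) (by simp [← hQ])
    exact ⟨x :: w₁, w₂, rfl, by simpa using hw₂⟩
  | @dequeue Q p d w x h ih => cases Q₁ with
    | nil =>
      obtain ⟨rfl, rfl⟩ := List.cons_eq_cons.1 hQ
      exact ⟨[], w, rfl, fun _ ↦ h.mem_iff⟩
    | cons a Q₁ =>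
      obtain ⟨rfl, hQ'⟩ := List.cons_eq_cons.1 hQ
      obtain ⟨w₁, w₂, rfl, hw₂⟩ := ih hQ'
      exact ⟨a :: w₁, w₂, rfl, hw₂⟩

theorem exists_split_at_letter {b : α} {p₁ p₂ : List α}
    (h : QueueRun [] (p₁ ++ b :: p₂) d w) :
    ∃ w₁ w₂ w₃, w = w₁ ++ b :: (w₂ ++ b :: w₃) ∧
      (∀ x, x ∈ w₁ ↔ x ∈ p₁) ∧ ∀ x, x ∈ w₃ ↔ x ∈ p₂ := by
  obtain ⟨w₁, w', Q', d', rfl, hpw, hwp, h'⟩ := h.exists_split_at_enqueue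
  obtain ⟨w₂, w₃, rfl, hw₃⟩ := h'.exists_split_at_dequeue
  exact ⟨w₁, w₂, w₃, rfl, fun x ↦ ⟨@hwp x, @hpw x⟩, by simpa using hw₃⟩

theorem doubled_middle_sublist_iff (h : QueueRun [] p d w) (hp : p.Nodup) {x y z : α} :
    [x, y, y, z] <+ w ↔ [x, y, z] <+ p := by
  classical
  by_cases hy : y ∈ p
  · obtain ⟨p₁, p₂, rfl⟩ := List.append_of_mem hy
    have hcount := h.count_eq y
    obtain ⟨w₁, w₂, w₃, rfl, hw₁, hw₃⟩ := h.exists_split_at_letter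
    have hyp₁ : y ∉ p₁ := by grind
    have hyp₂ : y ∉ p₂ := by grind
    have hyw₁ : y ∉ w₁ := by rwa [hw₁]
    have hyw₃ : y ∉ w₃ := by rwa [hw₃]
    have hyw₂ : y ∉ w₂ := by grind [List.count_eq_zero]
    calc [x, y, y, z] <+ w₁ ++ y :: (w₂ ++ y :: w₃)
        ↔ [x] <+ w₁ ∧ [y, z] <+ w₂ ++ y :: w₃ :=
          append_cons_sublist_append_cons_iff (u := [x]) hyw₁ (by grind)
      _ ↔ [x] <+ w₁ ∧ [] <+ w₂ ∧ [z] <+ w₃ :=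
          and_congr_right' <| append_cons_sublist_append_cons_iff (u := []) hyw₂ (by grind)
      _ ↔ [x] <+ p₁ ∧ [z] <+ p₂ := by simp [hw₁, hw₃]
      _ ↔ [x, y, z] <+ p₁ ++ y :: p₂ :=
          (append_cons_sublist_append_cons_iff (u := [x]) hyp₁ (by grind)).symm
  · have hyw : y ∉ w := by simpa [h.mem_iff] using hy
    exact iff_of_false (fun hs ↦ hyw (hs.subset (by simp))) fun hs ↦ hy (hs.subset (by simp))

theorem ncard_setOf_word {T : Set (List α)} {n : ℕ} (hnodup : ∀ p ∈ T, p.Nodup)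
    (hlength : ∀ p ∈ T, p.length = n) :
    {w | ∃ p ∈ T, ∃ d, QueueRun [] p d w}.ncard = T.ncard * catalan n := by
  have hcatalan : {E : DyckWord | E.semilength = n}.ncard = catalan n := by
    rw [← DyckWord.card_dyckWord_semilength_eq_catalan n, ← Nat.card_eq_fintype_card]
    rfl
  have hrun : ∀ x ∈ T ×ˢ {E : DyckWord | E.semilength = n},
      ∃ w, QueueRun [] x.1 x.2.toList w := by
    rintro ⟨p, E⟩ ⟨hp, hE⟩
    have hU : E.toList.count U = p.length := by rw [hlength p hp]; exact hE
    exact exists_word hU (by simp [← E.count_U_eq_count_D, hU])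
      fun i ↦ by simpa using E.count_D_le_count_U i
  choose word hword using hrun
  rw [← hcatalan, ← Set.ncard_prod]
  refine (Set.ncard_congr word ?_ ?_ ?_).symm
  · exact fun x hx ↦ ⟨x.1, hx.1, _, hword x hx⟩
  · intro x x' hx hx' heq
    obtain ⟨hp, hd⟩ := (hword x hx).input_steps_unique (heq ▸ hword x' hx')
      (hnodup _ hx.1) (hnodup _ hx'.1)
    exact Prod.ext hp (DyckWord.ext hd)
  · rintro w ⟨p, hp, d, h⟩
    let E : DyckWord := ⟨d, by simp [h.count_U, h.count_D], by simpa using h.count_D_take_le⟩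
    have hE : E.semilength = n := h.count_U.trans (hlength p hp)
    have hpE : (p, E) ∈ T ×ˢ {E : DyckWord | E.semilength = n} := ⟨hp, hE⟩
    exact ⟨(p, E), hpE, (hword _ hpE).word_unique h⟩

end QueueRun

section Pattern

variable {w : List ℕ} {a b c x y y' z : ℕ}

theorem orderIsoWord_iff_forall_mem_zip {t σ : List ℕ} :
    OrderIsoWord t σ ↔ t.length = σ.length ∧ ∀ i ∈ t.zip σ, ∀ j ∈ t.zip σ,
      (i.1 < j.1 ↔ i.2 < j.2) ∧ (i.1 = j.1 ↔ i.2 = j.2) := by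
  refine and_congr_right fun hlength ↦ ?_
  simp only [List.forall_mem_iff_forall_getElem]
  grind

theorem orderIsoWord_doubled_middle_iff :
    OrderIsoWord [x, y, y', z] [a, b, b, c] ↔ y = y' ∧ OrderIsoWord [x, y, z] [a, b, c] := by
  simp only [orderIsoWord_iff_forall_mem_zip]
  constructor
  · rintro ⟨-, h⟩
    obtain rfl : y = y' := (h (y, b) (by simp) (y', b) (by simp)).2.2 rfl
    exact ⟨rfl, rfl, by simpa using h⟩
  · rintro ⟨rfl, -, h⟩
    exact ⟨rfl, by simpa using h⟩

theorem contains_triple_iff :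
    Contains w [a, b, c] ↔ ∃ x y z, [x, y, z] <+ w ∧ OrderIsoWord [x, y, z] [a, b, c] := by
  refine ⟨fun ⟨t, ht, hiso⟩ ↦ ?_, fun ⟨x, y, z, ht, hiso⟩ ↦ ⟨_, ht, hiso⟩⟩
  obtain ⟨x, y, z, rfl⟩ := List.length_eq_three.1 hiso.1
  exact ⟨x, y, z, ht, hiso⟩

theorem contains_doubled_middle_iff :
    Contains w [a, b, b, c] ↔ ∃ x y z, [x, y, y, z] <+ w ∧ OrderIsoWord [x, y, z] [a, b, c] := by
  constructor
  · rintro ⟨t, ht, hiso⟩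
    match t, hiso.1 with
    | [x, y, y', z], _ =>
      obtain ⟨rfl, hiso'⟩ := orderIsoWord_doubled_middle_iff.1 hiso
      exact ⟨x, y, z, ht, hiso'⟩
  · rintro ⟨x, y, z, ht, hiso⟩
    exact ⟨_, ht, orderIsoWord_doubled_middle_iff.2 ⟨rfl, hiso⟩⟩

theorem not_nested_of_avoids (h₁ : Avoids w [1, 2, 2, 1]) (h₂ : Avoids w [2, 1, 1, 2])
    (hab : a ≠ b) : ¬ [a, b, b, a] <+ w := by
  intro hs
  rcases hab.lt_or_gt with hlt | hlt
  · refine h₁ (contains_doubled_middle_iff.2 ⟨a, b, a, hs, ?_⟩)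
    simp [orderIsoWord_iff_forall_mem_zip, hlt, hlt.le, hlt.ne, hlt.ne']
  · refine h₂ (contains_doubled_middle_iff.2 ⟨a, b, a, hs, ?_⟩)
    simp [orderIsoWord_iff_forall_mem_zip, hlt, hlt.le, hlt.ne, hlt.ne']

theorem avoids_of_nodup (hw : w.Nodup) : Avoids w [a, b, a] := by
  rw [Avoids, contains_triple_iff]
  rintro ⟨x, y, z, hs, hiso⟩
  obtain rfl : x = z := (hiso.2 0 2 (by simp) (by simp)).2.2 rfl
  simpa using hs.nodup hw

end Pattern

theorem IsPermWord.nodup {n : ℕ} {p : List ℕ} (hp : IsPermWord n p) : p.Nodup :=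
  List.nodup_iff_count_le_one.2 fun i ↦ by rw [hp i]; split_ifs <;> simp

theorem IsPermWord.length_eq {n : ℕ} {p : List ℕ} (hp : IsPermWord n p) : p.length = n := by
  have hfinset : p.toFinset = Finset.Icc 1 n := by
    ext i
    rw [List.mem_toFinset, Finset.mem_Icc, ← List.count_pos_iff, hp i]
    split_ifs <;> grind
  rw [← List.toFinset_card_of_nodup hp.nodup, hfinset, Nat.card_Icc, Nat.add_sub_cancel]

namespace QueueRun

variable {n : ℕ} {p w : List ℕ} {d : List DyckStep}

theorem isMultisetPerm_iff (h : QueueRun [] p d w) : IsMultisetPerm n w ↔ IsPermWord n p :=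
  forall_congr' fun i ↦ by rw [h.count_eq i]; grind

theorem avoids_doubled_middle_iff (h : QueueRun [] p d w) (hp : p.Nodup) {a b c : ℕ} :
    Avoids w [a, b, b, c] ↔ Avoids p [a, b, c] := by
  simp only [Avoids, contains_doubled_middle_iff, contains_triple_iff,
    h.doubled_middle_sublist_iff hp]

theorem forall_avoids_doubled_middle_iff (h : QueueRun [] p d w) (hp : p.Nodup)
    {S : Set (List ℕ)} (hS : ∀ σ ∈ S, σ.length = 3) :
    (∀ σ ∈ S, ∀ a b c : ℕ, σ = [a, b, c] → Avoids w [a, b, b, c]) ↔ ∀ σ ∈ S, Avoids p σ := by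
  refine forall₂_congr fun σ hσ ↦ ?_
  obtain ⟨a, b, c, rfl⟩ := List.length_eq_three.1 (hS σ hσ)
  simp [h.avoids_doubled_middle_iff hp]

end QueueRun

theorem isNonnesting_iff_exists_queueRun {n : ℕ} {w : List ℕ} :
    IsNonnesting n w ↔ ∃ p, IsPermWord n p ∧ ∃ d, QueueRun [] p d w := by
  constructor
  · rintro ⟨hw, h₁, h₂⟩
    have htwice : ∀ x ∈ w, w.count x = 2 := fun x hx ↦ by
      have := List.count_pos_iff.2 hx
      grind [hw x]
    obtain ⟨p, d, h⟩ := QueueRun.exists_of_nonnesting List.nodup_nil htwice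
      fun a b ↦ not_nested_of_avoids h₁ h₂
    exact ⟨p, h.isMultisetPerm_iff.1 hw, d, h⟩
  · rintro ⟨p, hp, d, h⟩
    exact ⟨h.isMultisetPerm_iff.2 hp,
      (h.avoids_doubled_middle_iff hp.nodup).2 (avoids_of_nodup hp.nodup),
      (h.avoids_doubled_middle_iff hp.nodup).2 (avoids_of_nodup hp.nodup)⟩

theorem nonnesting_avoid_middle_doubled_general (n : ℕ) (S : Set (List ℕ))
    (hS : ∀ σ ∈ S, σ.length = 3) :
    {w : List ℕ | IsNonnesting n w ∧
        ∀ σ ∈ S, ∀ a b c : ℕ, σ = [a, b, c] → Avoids w [a, b, b, c]}.ncard =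
      {p : List ℕ | IsPermWord n p ∧ ∀ σ ∈ S, Avoids p σ}.ncard * catalan n := by
  rw [← QueueRun.ncard_setOf_word (fun _ hp ↦ hp.1.nodup) (fun _ hp ↦ hp.1.length_eq)]
  congr 1
  ext w
  simp only [Set.mem_ofPred_eq, isNonnesting_iff_exists_queueRun]
  constructor
  · rintro ⟨⟨p, hp, d, h⟩, hw⟩
    exact ⟨p, ⟨hp, (h.forall_avoids_doubled_middle_iff hp.nodup hS).1 hw⟩, d, h⟩
  · rintro ⟨p, ⟨hp, hpS⟩, d, h⟩
    exact ⟨⟨p, hp, d, h⟩, (h.forall_avoids_doubled_middle_iff hp.nodup hS).2 hpS⟩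

theorem nonnesting_avoid_middle_doubled (n : ℕ) (hn : 1 ≤ n)
    (S : Finset (List ℕ)) (hS : ∀ σ ∈ S, σ.Perm [1, 2, 3]) :
    {w : List ℕ | IsNonnesting n w ∧
        ∀ σ ∈ S, ∀ a b c : ℕ, σ = [a, b, c] → Avoids w [a, b, b, c]}.ncard =
      {p : List ℕ | IsPermWord n p ∧ ∀ σ ∈ S, Avoids p σ}.ncard * catalan n := by
  exact nonnesting_avoid_middle_doubled_general n S fun σ hσ ↦ (hS σ hσ).length_eq
end

section
/- For every permutation ijk of {1,2,3} and all n ≥ 1, the number of nonnesting permutations of the multiset {1,1,2,2,…,n,n} that avoid the length-4 pattern ijjk (obtained from ijk by duplicating its middle letter) equals C_n², the square of the nth Catalan number. -/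
/-!
The second copies of the letters of a nonnesting permutation `w` occur in the same order `p` as the
first copies, so `w` amounts to `p`, which is `w.dedup`, together with the lattice path recording
whether successive letters of `w` are first or second copies. The path is an arbitrary Dyck path,
since a second copy always repeats the oldest letter seen only once. Moreover, if `x, y` occur in
this order in `p`, then both `x, x, y` and `x, y, y` are subsequences of `w`; hence `w` contains
`ijjk` if and only if `p` contains `ijk`.

It remains to count the permutations `p` avoiding `ijk`. After a reversal, `i` is the largest or the
smallest of the three letters, say the largest. While `p` is read from left to right, the letters
still to come which are smaller than some letter already read have to appear in a prescribed
order, so only their number `h` and the number `r` of the other remaining letters matter. The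
completions satisfy the recursion of the lattice paths from height `h` to height `0` with `r`
up-steps, and for `h = 0` these are the Dyck paths again.
-/

section BallotPaths

open DyckStep

/-- `BallotPath h r d`: read as up- and down-steps, `d` is a lattice path from height `h` to
height `0` which never goes below `0` and has exactly `r` up-steps. -/
inductive BallotPath : ℕ → ℕ → List DyckStep → Prop
  | nil : BallotPath 0 0 []
  | up {h r d} : BallotPath (h + 1) r d → BallotPath h (r + 1) (U :: d)
  | down {h r d} : BallotPath h r d → BallotPath (h + 1) r (D :: d)

namespace BallotPath

theorem setOf_zero_zero : {d | BallotPath 0 0 d} = {[]} := by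
  ext d
  exact ⟨fun | .nil => rfl, fun hd => hd ▸ .nil⟩

theorem setOf_succ_zero (h : ℕ) :
    {d | BallotPath (h + 1) 0 d} = (D :: ·) '' {d | BallotPath h 0 d} := by
  ext d
  exact ⟨fun | .down hd => ⟨_, hd, rfl⟩, fun ⟨_, hd, e⟩ => e ▸ .down hd⟩

theorem setOf_zero_succ (r : ℕ) :
    {d | BallotPath 0 (r + 1) d} = (U :: ·) '' {d | BallotPath 1 r d} := by
  ext d
  exact ⟨fun | .up hd => ⟨_, hd, rfl⟩, fun ⟨_, hd, e⟩ => e ▸ .up hd⟩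

theorem setOf_succ_succ (h r : ℕ) :
    {d | BallotPath (h + 1) (r + 1) d} =
      (D :: ·) '' {d | BallotPath h (r + 1) d} ∪ (U :: ·) '' {d | BallotPath (h + 2) r d} := by
  ext d
  constructor
  · rintro (_ | hd | hd)
    exacts [.inr ⟨_, hd, rfl⟩, .inl ⟨_, hd, rfl⟩]
  · rintro (⟨_, hd, rfl⟩ | ⟨_, hd, rfl⟩)
    exacts [.down hd, .up hd]

theorem encard_succ_succ (h r : ℕ) :
    {d | BallotPath (h + 1) (r + 1) d}.encard =
      {d | BallotPath h (r + 1) d}.encard + {d | BallotPath (h + 2) r d}.encard := by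
  rw [setOf_succ_succ, Set.encard_union_eq, List.cons_injective.encard_image,
    List.cons_injective.encard_image]
  rw [Set.disjoint_left]
  rintro _ ⟨_, _, rfl⟩ ⟨_, _, e⟩
  cases e

theorem count_eq_and_count_take_le {h r : ℕ} {d : List DyckStep} (hd : BallotPath h r d) :
    d.count U = r ∧ d.count D = h + r ∧ ∀ i, (d.take i).count D ≤ h + (d.take i).count U := by
  induction hd with
  | nil => simp
  | up _ ih =>
    obtain ⟨hU, hD, hle⟩ := ih
    refine ⟨by simp [hU], by rw [List.count_cons_of_ne (by decide)]; omega, fun i => ?_⟩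
    cases i with
    | zero => simp
    | succ i => simpa [Nat.add_right_comm, Nat.add_assoc] using hle i
  | down _ ih =>
    obtain ⟨hU, hD, hle⟩ := ih
    refine ⟨by simp [hU], by rw [List.count_cons_self]; omega, fun i => ?_⟩
    cases i with
    | zero => simp
    | succ i => simpa [Nat.add_right_comm] using hle i

theorem of_count {h r : ℕ} {d : List DyckStep} (hU : d.count U = r) (hD : d.count D = h + r)
    (hle : ∀ i, (d.take i).count D ≤ h + (d.take i).count U) : BallotPath h r d := by
  induction d generalizing h r with
  | nil =>
    obtain rfl : r = 0 := by simpa using hU.symm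
    obtain rfl : h = 0 := by simpa using hD.symm
    exact .nil
  | cons s d ih =>
    have hle' := fun i => hle (i + 1)
    cases s with
    | U =>
      simp only [List.count_cons_self, List.take_succ_cons, reduceCtorEq, not_false_eq_true,
        List.count_cons_of_ne, ne_eq] at hU hD hle'
      obtain _ | r := r
      · omega
      · exact .up (ih (by omega) (by omega) fun i => by have := hle' i; omega)
    | D =>
      simp only [List.count_cons_self, List.take_succ_cons, reduceCtorEq, not_false_eq_true,
        List.count_cons_of_ne, ne_eq] at hU hD hle'
      obtain _ | h := h
      · simpa using hle' 0
      · exact .down (ih (by omega) (by omega) fun i => by have := hle' i; omega)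

theorem zero_iff_exists_dyckWord {n : ℕ} {d : List DyckStep} :
    BallotPath 0 n d ↔ ∃ p : DyckWord, p.semilength = n ∧ p.toList = d := by
  constructor
  · intro hd
    obtain ⟨hU, hD, hle⟩ := hd.count_eq_and_count_take_le
    simp only [Nat.zero_add] at hD hle
    exact ⟨⟨d, hU.trans hD.symm, hle⟩, hU, rfl⟩
  · rintro ⟨p, rfl, rfl⟩
    refine .of_count rfl ?_ ?_ <;> simp only [Nat.zero_add]
    exacts [p.semilength_eq_count_D.symm, p.count_D_le_count_U]

theorem encard_zero (n : ℕ) : {d | BallotPath 0 n d}.encard = catalan n := by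
  have toList_injective : Function.Injective DyckWord.toList := fun _ _ => DyckWord.ext
  have image_eq : {d | BallotPath 0 n d} = DyckWord.toList '' {p | p.semilength = n} :=
    Set.ext fun _ => zero_iff_exists_dyckWord
  rw [image_eq, toList_injective.encard_image, ← DyckWord.card_dyckWord_semilength_eq_catalan,
    ← ENat.card_eq_coe_fintype_card]
  rfl

end BallotPath

end BallotPaths

section NonnestingWords

open DyckStep List

variable {α : Type*}

theorem cons_sublist_of_notMem_left {y : α} {l s t : List α} (h : y :: l <+ s ++ t) (hy : y ∉ s) :
    y :: l <+ t := by
  obtain ⟨a, b, hab, ha, hb⟩ := sublist_append_iff.1 h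
  obtain _ | ⟨c, a⟩ := a
  · simpa only [hab, nil_append] using hb
  · obtain ⟨rfl, -⟩ := cons_eq_cons.1 hab
    exact absurd (ha.subset mem_cons_self) hy

theorem sublist_of_sublist_append_cons {q : α} {l s t : List α} (h : l <+ s ++ q :: t)
    (hq : q ∉ l) : l <+ s ++ t := by
  obtain ⟨a, b, rfl, ha, hb⟩ := sublist_append_iff.1 h
  refine ha.append ((sublist_cons_iff.1 hb).resolve_right ?_)
  rintro ⟨r, rfl, -⟩
  simp at hq

theorem sublist_or_sublist_swap_of_mem {l : List α} {x y : α} (hxy : x ≠ y) (hx : x ∈ l)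
    (hy : y ∈ l) : [x, y] <+ l ∨ [y, x] <+ l := by
  obtain ⟨s, t, rfl⟩ := append_of_mem hx
  rcases mem_append.1 hy with hys | hyt
  · exact .inr ((singleton_sublist.2 hys).append (singleton_sublist.2 mem_cons_self))
  · have hyt : y ∈ t := (mem_cons.1 hyt).resolve_left hxy.symm
    exact .inl (((singleton_sublist.2 hyt).cons_cons x).trans (sublist_append_right s _))

/-- The word obtained by following the steps of `d` while maintaining a queue `Q`: an up-step
writes the next letter of `p` and enqueues it, a down-step dequeues a letter and writes it again.
Started with the empty queue, it places the second copies of the letters of `p` in the order of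
the first ones. The value is junk unless the path and the lists match in length, as in
`BallotPath Q.length p.length d`. -/
def weave : List DyckStep → List α → List α → List α
  | U :: d, Q, x :: p => x :: weave d (Q ++ [x]) p
  | D :: d, x :: Q, p => x :: weave d Q p
  | _, _, _ => []

theorem BallotPath.weaveInduction
    {motive : (d : List DyckStep) → (Q p : List α) → BallotPath Q.length p.length d → Prop}
    (nil : motive [] [] [] .nil)
    (up : ∀ d Q x p (hd : BallotPath (Q ++ [x]).length p.length d), motive d (Q ++ [x]) p hd →
      motive (U :: d) Q (x :: p) (.up (by simpa using hd)))
    (down : ∀ d x Q p (hd : BallotPath Q.length p.length d), motive d Q p hd →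
      motive (D :: d) (x :: Q) p (.down hd))
    {d : List DyckStep} {Q p : List α} (hd : BallotPath Q.length p.length d) :
    motive d Q p hd := by
  obtain ⟨h, r, hh, hr, hd'⟩ : ∃ h r, Q.length = h ∧ p.length = r ∧ BallotPath h r d :=
    ⟨_, _, rfl, rfl, hd⟩
  induction hd' generalizing Q p with
  | nil =>
    obtain rfl := length_eq_zero_iff.1 hh
    obtain rfl := length_eq_zero_iff.1 hr
    exact nil
  | @up _ _ d hd' ih =>
    obtain ⟨x, p, rfl⟩ := exists_of_length_succ p hr
    obtain rfl := hh
    obtain rfl := Nat.succ_injective hr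
    have hd' : BallotPath (Q ++ [x]).length p.length d := by simpa using hd'
    exact up _ _ _ _ hd' (ih hd' (by simp) rfl)
  | down hd' ih =>
    obtain ⟨x, Q, rfl⟩ := exists_of_length_succ Q hh
    obtain rfl := hr
    obtain rfl := Nat.succ_injective hh
    exact down _ _ _ _ hd' (ih hd' rfl rfl)

theorem eq_of_weave_eq {d d' : List DyckStep} {Q p : List α}
    (hd : BallotPath Q.length p.length d) (hd' : BallotPath Q.length p.length d')
    (hQp : (Q ++ p).Nodup) (h : weave d Q p = weave d' Q p) : d = d' := by
  induction hd using BallotPath.weaveInduction generalizing d' with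
  | nil =>
    cases hd'
    rfl
  | up d Q x p _ ih =>
    generalize hh : Q.length = l at hd'
    cases hd' with
    | up hd' =>
      subst hh
      rw [ih (by simpa using hd') (by simpa using hQp) (cons_injective h)]
    | down hd' =>
      obtain ⟨y, Q, rfl⟩ := exists_of_length_succ Q hh
      obtain rfl : x = y := (cons_eq_cons.1 h).1
      simp at hQp
  | down d x Q p hd ih =>
    generalize hh : p.length = l at hd'
    cases hd' with
    | up hd' =>
      obtain ⟨y, p, rfl⟩ := exists_of_length_succ p hh
      obtain rfl : x = y := (cons_eq_cons.1 h).1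
      simp at hQp
    | down hd' =>
      subst hh
      rw [ih hd' (nodup_cons.1 hQp).2 (cons_injective h)]

variable [DecidableEq α]

theorem append_cons_sublist_of_count_le {l₁ l₂ w : List α} {y : α} {k : ℕ} (hw : w.count y ≤ k)
    (h₁ : l₁ ++ replicate k y <+ w) (h₂ : y :: l₂ <+ w) : l₁ ++ y :: l₂ <+ w := by
  obtain ⟨s, t, rfl, hs, ht⟩ := append_sublist_iff.1 h₁
  have hkt : k ≤ t.count y := replicate_sublist_iff.1 ht
  have hys : y ∉ s := by
    rw [count_append] at hw
    exact count_eq_zero.1 (by omega)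
  exact hs.append (cons_sublist_of_notMem_left h₂ hys)

theorem replicate_count_append_sublist_of_sublist_dedup {w : List α} {x y : α}
    (h : [x, y] <+ w.dedup) : replicate (w.count x) x ++ [y] <+ w := by
  induction w with
  | nil => simp at h
  | cons a w ih =>
    by_cases ha : a ∈ w
    · rw [dedup_cons_of_mem ha] at h
      obtain rfl | hax := eq_or_ne a x
      · simpa [replicate_succ] using ih h
      · simpa [count_cons_of_ne hax] using (ih h).cons a
    · rw [dedup_cons_of_notMem ha] at h
      rcases sublist_cons_iff.1 h with h | ⟨_, e, h⟩
      · have hax : a ≠ x := fun e => ha (e ▸ mem_dedup.1 (h.subset mem_cons_self))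
        simpa [count_cons_of_ne hax] using (ih h).cons a
      · obtain ⟨rfl, rfl⟩ := cons_eq_cons.1 e
        simpa [count_eq_zero.2 ha] using h

/-- A word in which every letter occurs exactly twice and no two letters are nested: the words
called nonnesting permutations, over an arbitrary alphabet and without reference to an order. -/
structure IsNonnestingWord (w : List α) : Prop where
  count_eq_two : ∀ x ∈ w, w.count x = 2
  not_nested : ∀ x y, x ≠ y → ¬ [x, y, y, x] <+ w

namespace IsNonnestingWord

variable {w : List α} {x y z : α}

theorem count_le_two (hw : IsNonnestingWord w) (x : α) : w.count x ≤ 2 := by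
  by_cases hx : x ∈ w
  · exact (hw.count_eq_two x hx).le
  · simp [count_eq_zero.2 hx]

theorem sublist_left_of_sublist_dedup (hw : IsNonnestingWord w) (h : [x, y] <+ w.dedup) :
    [x, x, y] <+ w := by
  have hx : x ∈ w := mem_dedup.1 (h.subset mem_cons_self)
  simpa [hw.count_eq_two x hx, replicate_succ]
    using replicate_count_append_sublist_of_sublist_dedup h

theorem sublist_right_of_sublist_dedup (hw : IsNonnestingWord w) (h : [x, y] <+ w.dedup) :
    [x, y, y] <+ w := by
  have hxy : x ≠ y := by simpa using (nodup_dedup w).sublist h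
  have hxxy : [x, x, y] <+ w := hw.sublist_left_of_sublist_dedup h
  have count_y : w.count y = 2 := hw.count_eq_two y (hxxy.subset (by simp))
  obtain ⟨s, t, rfl, hxs⟩ := eq_append_cons_of_mem (hxxy.subset mem_cons_self)
  by_cases hys : y ∈ s
  · have nested : [y, x, x, y] <+ s ++ x :: t :=
      (singleton_sublist.2 hys).append (cons_sublist_of_notMem_left hxxy hxs)
    exact absurd nested (hw.not_nested y x hxy.symm)
  · have count_t : t.count y = 2 := by
      simpa [count_append, count_eq_zero.2 hys, count_cons_of_ne hxy] using count_y
    have hyt : [y, y] <+ t := replicate_sublist_iff (n := 2).2 count_t.ge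
    exact (hyt.cons_cons x).trans (sublist_append_right s _)

theorem sublist_dedup_of_sublist_right (hw : IsNonnestingWord w) (hxy : x ≠ y)
    (h : [x, y, y] <+ w) : [x, y] <+ w.dedup := by
  refine (sublist_or_sublist_swap_of_mem hxy (mem_dedup.2 (h.subset (by simp)))
    (mem_dedup.2 (h.subset (by simp)))).resolve_right fun hyx => hw.not_nested x y hxy ?_
  exact append_cons_sublist_of_count_le (l₁ := [x]) (hw.count_le_two y) h
    (hw.sublist_left_of_sublist_dedup hyx)

theorem sublist_dedup_of_sublist_left (hw : IsNonnestingWord w) (hxy : x ≠ y)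
    (h : [x, x, y] <+ w) : [x, y] <+ w.dedup := by
  refine (sublist_or_sublist_swap_of_mem hxy (mem_dedup.2 (h.subset (by simp)))
    (mem_dedup.2 (h.subset (by simp)))).resolve_right fun hyx => hw.not_nested y x hxy.symm ?_
  exact append_cons_sublist_of_count_le (l₁ := [y]) (hw.count_le_two x)
    (hw.sublist_right_of_sublist_dedup hyx) h

theorem sublist_iff_sublist_dedup (hw : IsNonnestingWord w) (hxy : x ≠ y) (hyz : y ≠ z) :
    [x, y, y, z] <+ w ↔ [x, y, z] <+ w.dedup := by
  constructor
  · intro h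
    have hxy' : [x, y] <+ w.dedup := hw.sublist_dedup_of_sublist_right hxy
      ((sublist_append_left [x, y, y] [z]).trans h)
    have hyz' : [y, z] <+ w.dedup := hw.sublist_dedup_of_sublist_left hyz
      ((sublist_cons_self x _).trans h)
    exact append_cons_sublist_of_count_le (l₁ := [x]) (k := 1)
      (nodup_iff_count_le_one.1 (nodup_dedup w) y) hxy' hyz'
  · intro h
    have hxyy : [x, y, y] <+ w := hw.sublist_right_of_sublist_dedup
      ((sublist_append_left [x, y] [z]).trans h)
    have hyyz : [y, y, z] <+ w := hw.sublist_left_of_sublist_dedup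
      ((sublist_cons_self x _).trans h)
    exact append_cons_sublist_of_count_le (l₁ := [x]) (hw.count_le_two y) hxyy hyyz

end IsNonnestingWord

theorem isNonnestingWord_cons_append_cons {q : α} {Q w : List α} (hQ : (q :: Q).Nodup) :
    IsNonnestingWord (q :: Q ++ q :: w) ↔ q ∉ w ∧ IsNonnestingWord (Q ++ w) := by
  obtain ⟨hqQ, hQ⟩ := nodup_cons.1 hQ
  have hsub : Q ++ w <+ q :: Q ++ q :: w := (sublist_cons_self q Q).append (sublist_cons_self q w)
  constructor
  · intro h
    have hqw : q ∉ w := by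
      have count_q : (q :: Q ++ q :: w).count q = 2 := h.count_eq_two q (by simp)
      simp only [cons_append, count_append, count_cons_self] at count_q
      exact count_eq_zero.1 (by omega)
    refine ⟨hqw, fun x hx => ?_, fun x y hxy hs => h.not_nested x y hxy (hs.trans hsub)⟩
    have hqx : q ≠ x := by rintro rfl; simp [hqQ, hqw] at hx
    simpa [count_append, count_cons_of_ne hqx] using h.count_eq_two x (hsub.subset hx)
  · rintro ⟨hqw, h⟩
    refine ⟨fun x hx => ?_, fun x y hxy hs => ?_⟩
    · obtain rfl | hqx := eq_or_ne q x
      · simp [count_append, count_eq_zero.2 hqw, count_eq_zero.2 hqQ]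
      · simpa [count_append, count_cons_of_ne hqx] using h.count_eq_two x (by grind)
    · obtain rfl | hqx := eq_or_ne q x
      · have hs : [y, y, q] <+ Q ++ q :: w := cons_sublist_cons.1 hs
        have hs : [q, y, y] <+ w.reverse ++ q :: Q.reverse := by simpa using hs.reverse
        have hyy : [y, y] <+ Q.reverse :=
          cons_sublist_cons.1 (cons_sublist_of_notMem_left hs (by simpa using hqw))
        simpa using (nodup_reverse.2 hQ).sublist hyy
      have hs : [x, y, y, x] <+ Q ++ q :: w :=
        (sublist_cons_iff.1 hs).resolve_right fun ⟨_, e, _⟩ => hqx (cons_eq_cons.1 e).1.symm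
      have hqy : q ≠ y := by
        rintro rfl
        simpa [count_append, count_eq_zero.2 hqw, count_eq_zero.2 hqQ, count_cons_of_ne hxy]
          using hs.count_le q
      exact h.not_nested x y hxy (sublist_of_sublist_append_cons hs (by simp [hqx, hqy]))

theorem dedup_weave {d : List DyckStep} {Q p : List α} (hd : BallotPath Q.length p.length d)
    (hQp : (Q ++ p).Nodup) : (weave d Q p).dedup = Q ++ p := by
  induction hd using BallotPath.weaveInduction with
  | nil => simp [weave]
  | up d Q x p _ ih =>
    have ih : (weave d (Q ++ [x]) p).dedup = Q ++ x :: p := by simpa using ih (by simpa using hQp)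
    have hx : x ∈ weave d (Q ++ [x]) p := mem_dedup.1 (by simp [ih])
    rw [weave, dedup_cons_of_mem hx, ih]
  | down d x Q p _ ih =>
    obtain ⟨hx, hQp⟩ := nodup_cons.1 hQp
    have hx : x ∉ weave d Q p := by rwa [← mem_dedup, ih hQp]
    rw [weave, dedup_cons_of_notMem hx, ih hQp, cons_append]

theorem isNonnestingWord_append_weave {d : List DyckStep} {Q p : List α}
    (hd : BallotPath Q.length p.length d) (hQp : (Q ++ p).Nodup) :
    IsNonnestingWord (Q ++ weave d Q p) := by
  induction hd using BallotPath.weaveInduction with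
  | nil => exact ⟨by simp [weave], by simp [weave]⟩
  | up d Q x p _ ih => simpa [weave] using ih (by simpa using hQp)
  | down d x Q p hd ih =>
    obtain ⟨hx, hQp'⟩ := nodup_cons.1 hQp
    have hx : x ∉ weave d Q p := by rwa [← mem_dedup, dedup_weave hd hQp']
    exact (isNonnestingWord_cons_append_cons (hQp.sublist (sublist_append_left _ p))).2
      ⟨hx, ih hQp'⟩

theorem IsNonnestingWord.exists_weave_eq {Q w : List α} (hQ : Q.Nodup)
    (hw : IsNonnestingWord (Q ++ w)) :
    ∃ d p, BallotPath Q.length p.length d ∧ (Q ++ p).Nodup ∧ weave d Q p = w := by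
  induction w generalizing Q with
  | nil =>
    obtain rfl : Q = [] := by
      refine eq_nil_iff_forall_not_mem.2 fun x hx => ?_
      have count_le_one : Q.count x ≤ 1 := nodup_iff_count_le_one.1 hQ x
      have count_eq_two : Q.count x = 2 := by
        simpa only [append_nil] using hw.count_eq_two x (mem_append_left [] hx)
      omega
    exact ⟨[], [], .nil, by simp, rfl⟩
  | cons x w ih =>
    by_cases hx : x ∈ Q
    · obtain ⟨y, Q, rfl⟩ := exists_cons_of_ne_nil (ne_nil_of_mem hx)
      -- A letter occurring for the second time must be the oldest pending one.
      obtain rfl : x = y := by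
        by_contra hxy
        have hxQ : x ∈ Q := (mem_cons.1 hx).resolve_left hxy
        have hyw : y ∈ w := by
          have hyQ : Q.count y = 0 := count_eq_zero.2 (nodup_cons.1 hQ).1
          by_contra hyw
          simpa [count_append, hyQ, count_eq_zero.2 hyw, count_cons_of_ne hxy]
            using hw.count_eq_two y (by simp)
        refine hw.not_nested y x (Ne.symm hxy) ?_
        exact .append ((singleton_sublist.2 hxQ).cons_cons y)
          ((singleton_sublist.2 hyw).cons_cons x)
      obtain ⟨hxw, hw⟩ := (isNonnestingWord_cons_append_cons hQ).1 hw
      obtain ⟨d, p, hd, hQp, rfl⟩ := ih (nodup_cons.1 hQ).2 hw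
      refine ⟨D :: d, p, .down hd, ?_, rfl⟩
      rw [← mem_dedup, dedup_weave hd hQp] at hxw
      exact nodup_cons.2 ⟨hxw, hQp⟩
    · obtain ⟨d, p, hd, hQp, rfl⟩ := ih (Q := Q ++ [x]) (by grind) (by simpa using hw)
      exact ⟨U :: d, x :: p, .up (by simpa using hd), by simpa using hQp, rfl⟩

theorem encard_isNonnestingWord_dedup_mem {n : ℕ} {A : Set (List α)}
    (hA : ∀ p ∈ A, p.Nodup ∧ p.length = n) :
    {w | IsNonnestingWord w ∧ w.dedup ∈ A}.encard = catalan n * A.encard := by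
  have dedup_weave_nil : ∀ d p, BallotPath 0 n d → p ∈ A → (weave d [] p).dedup = p :=
    fun d p hd hp => dedup_weave (by simpa [hA p hp] using hd) (hA p hp).1
  have image_eq : {w | IsNonnestingWord w ∧ w.dedup ∈ A} =
      (fun dp => weave dp.1 [] dp.2) '' ({d | BallotPath 0 n d} ×ˢ A) := by
    ext w
    constructor
    · rintro ⟨hw, hA'⟩
      obtain ⟨d, p, hd, hp, rfl⟩ := IsNonnestingWord.exists_weave_eq nodup_nil hw
      rw [dedup_weave hd hp] at hA'
      exact ⟨(d, p), ⟨by simpa [(hA p hA').2] using hd, hA'⟩, rfl⟩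
    · rintro ⟨⟨d, p⟩, ⟨hd, hp⟩, rfl⟩
      refine ⟨isNonnestingWord_append_weave (Q := []) (by simpa [hA p hp] using hd) (hA p hp).1, ?_⟩
      rwa [dedup_weave_nil d p hd hp]
  have injOn : Set.InjOn (fun dp => weave dp.1 [] dp.2) ({d | BallotPath 0 n d} ×ˢ A) := by
    rintro ⟨d, p⟩ ⟨hd, hp⟩ ⟨d', p'⟩ ⟨hd', hp'⟩ h
    obtain rfl : p = p' := by
      rw [← dedup_weave_nil d p hd hp, ← dedup_weave_nil d' p' hd' hp']
      exact congrArg dedup h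
    have hn : p.length = n := (hA p hp).2
    obtain rfl : d = d' := eq_of_weave_eq (Q := []) (by simpa [hn] using hd)
      (by simpa [hn] using hd') (hA p hp).1 h
    rfl
  rw [image_eq, injOn.encard_image, Set.encard_prod, BallotPath.encard_zero]

end NonnestingWords

section PatternAvoidance

open List

variable {α : Type*} [DecidableEq α]

theorem exists_least (R : α → α → Prop) [IsStrictTotalOrder α R] {F : Finset α}
    (hF : F.Nonempty) : ∃ m ∈ F, ∀ y ∈ F.erase m, R m y := by
  classical
  let := linearOrderOfSTO R
  refine ⟨F.min' hF, F.min'_mem hF, fun y hy => ?_⟩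
  obtain ⟨hne, hy⟩ := Finset.mem_erase.1 hy
  exact lt_of_le_of_ne (F.min'_le y hy) hne.symm

/-- The words in which every letter of `G` occurs exactly once and no other letter occurs. -/
def arrangements (G : Finset α) : Set (List α) :=
  {p | p.Nodup ∧ p.toFinset = G}

theorem mem_iff_of_mem_arrangements {G : Finset α} {p : List α} (hp : p ∈ arrangements G) (x : α) :
    x ∈ p ↔ x ∈ G := by
  rw [← hp.2, mem_toFinset]

theorem arrangements_empty : arrangements (∅ : Finset α) = {[]} := by
  ext p
  refine ⟨fun hp => (toFinset_eq_empty_iff p).1 hp.2, ?_⟩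
  rintro rfl
  exact ⟨nodup_nil, rfl⟩

theorem cons_mem_arrangements {G : Finset α} {x : α} {t : List α} :
    x :: t ∈ arrangements G ↔ x ∈ G ∧ t ∈ arrangements (G.erase x) := by
  constructor
  · rintro ⟨hp, rfl⟩
    obtain ⟨hx, ht⟩ := nodup_cons.1 hp
    exact ⟨by simp, ht, by simp [hx]⟩
  · rintro ⟨hx, ht, hset⟩
    have hxt : x ∉ t := by simp [← mem_toFinset, hset]
    exact ⟨nodup_cons.2 ⟨hxt, ht⟩, by simp [hset, Finset.insert_erase hx]⟩

/-- The words that can complete a word avoiding a three-letter pattern whose first letter is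
`R`-extreme: the condition on triples is the avoidance, a triple `x, y, z` being forbidden if `y`
and `z` are `R`-below `x` and not in `S`-order. The letters still to be written are divided into
`H`, those which are `R`-below some letter of the part already written, and `F`, the others. -/
def pendingWords (R S : α → α → Prop) (H F : Finset α) : Set (List α) :=
  {p ∈ arrangements (H ∪ F) | p.Triplewise (fun x y z => R y x → R z x → S y z) ∧
    p.Pairwise (fun y z => y ∈ H → z ∈ H → S y z)}

/-- The words of `pendingWords R S H F` whose first letter lies in `F`. -/
def freshWords (R S : α → α → Prop) (H F : Finset α) : Set (List α) :=
  {p ∈ pendingWords R S H F | ∃ x ∈ F, p.head? = some x}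

variable {R S : α → α → Prop} {H F : Finset α} {s m x : α} {t : List α}

theorem pendingWords_empty_empty : pendingWords R S ∅ ∅ = {[]} := by
  rw [pendingWords, Finset.union_empty, arrangements_empty]
  ext p
  exact ⟨And.left, fun hp => ⟨hp, by simp [Set.mem_singleton_iff.1 hp]⟩⟩

theorem freshWords_empty_right : freshWords R S H ∅ = ∅ := by
  simp [freshWords]

theorem cons_mem_freshWords : x :: t ∈ freshWords R S H F ↔
    x :: t ∈ pendingWords R S H F ∧ x ∈ F := by
  simp [freshWords]

theorem cons_mem_pendingWords : x :: t ∈ pendingWords R S H F ↔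
    (x ∈ H ∪ F ∧ t ∈ arrangements ((H ∪ F).erase x)) ∧
      (t.Pairwise (fun y z => R y x → R z x → S y z) ∧
        t.Triplewise (fun x y z => R y x → R z x → S y z)) ∧
      (∀ y ∈ t, x ∈ H → y ∈ H → S x y) ∧ t.Pairwise (fun y z => y ∈ H → z ∈ H → S y z) :=
  and_congr cons_mem_arrangements (and_congr triplewise_cons pairwise_cons)

theorem nil_notMem_pendingWords (h : (H ∪ F).Nonempty) : [] ∉ pendingWords R S H F :=
  fun hp => h.ne_empty hp.1.2.symm

theorem pendingWords_empty_left (hF : F.Nonempty) :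
    pendingWords R S ∅ F = freshWords R S ∅ F := by
  ext p
  refine ⟨fun hp => ?_, And.left⟩
  obtain _ | ⟨x, t⟩ := p
  · exact absurd hp (nil_notMem_pendingWords (by simpa using hF))
  · exact cons_mem_freshWords.2 ⟨hp, by simpa using (cons_mem_pendingWords.1 hp).1.1⟩

theorem encard_image_cons_union_freshWords (hx : x ∉ F) (A : Set (List α)) :
    ((x :: ·) '' A ∪ freshWords R S H F).encard = A.encard + (freshWords R S H F).encard := by
  rw [Set.encard_union_eq, cons_injective.encard_image]
  rw [Set.disjoint_left]
  rintro _ ⟨t, -, rfl⟩ hp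
  exact hx (cons_mem_freshWords.1 hp).2

section Asymm

variable [Std.Asymm R]

theorem cons_mem_pendingWords_of_mem_left (hHF : ∀ a ∈ H, ∀ b ∈ F, R a b) (hs : s ∈ H)
    (hmin : ∀ y ∈ H.erase s, S s y) :
    s :: t ∈ pendingWords R S H F ↔ t ∈ pendingWords R S (H.erase s) F := by
  have hsF : s ∉ F := fun h => irrefl_of R s (hHF s hs s h)
  rw [cons_mem_pendingWords, Finset.erase_union_distrib, Finset.erase_eq_of_notMem hsF]
  constructor
  · rintro ⟨⟨-, ht⟩, ⟨-, htriple⟩, -, hpair⟩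
    refine ⟨ht, htriple, hpair.imp fun h hy hz => ?_⟩
    exact h (Finset.mem_of_mem_erase hy) (Finset.mem_of_mem_erase hz)
  · rintro ⟨ht, htriple, hpair⟩
    have mem_iff := mem_iff_of_mem_arrangements ht
    have mem_of_rel : ∀ y ∈ t, R y s → y ∈ H.erase s := fun y hy hys =>
      (Finset.mem_union.1 ((mem_iff y).1 hy)).resolve_right fun hyF =>
        asymm_of R hys (hHF s hs y hyF)
    have mem_erase : ∀ y ∈ t, y ∈ H → y ∈ H.erase s := fun y hy hyH =>
      Finset.mem_erase.2 ⟨by rintro rfl; simpa [hsF] using (mem_iff y).1 hy, hyH⟩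
    refine ⟨⟨Finset.mem_union_left F hs, ht⟩, ⟨?_, htriple⟩, ?_, ?_⟩
    · exact hpair.imp_of_mem fun hy hz h hys hzs => h (mem_of_rel _ hy hys) (mem_of_rel _ hz hzs)
    · exact fun y hy _ hyH => hmin y (mem_erase y hy hyH)
    · exact hpair.imp_of_mem fun hy hz h hyH hzH => h (mem_erase _ hy hyH) (mem_erase _ hz hzH)

theorem pendingWords_eq_union [Std.Asymm S] (hHF : ∀ a ∈ H, ∀ b ∈ F, R a b) (hs : s ∈ H)
    (hmin : ∀ y ∈ H.erase s, S s y) :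
    pendingWords R S H F =
      (s :: ·) '' pendingWords R S (H.erase s) F ∪ freshWords R S H F := by
  ext p
  constructor
  · intro hp
    obtain _ | ⟨x, t⟩ := p
    · exact absurd hp (nil_notMem_pendingWords ⟨s, Finset.mem_union_left F hs⟩)
    by_cases hxF : x ∈ F
    · exact .inr (cons_mem_freshWords.2 ⟨hp, hxF⟩)
    obtain ⟨⟨hx, ht⟩, -, hlt, -⟩ := cons_mem_pendingWords.1 hp
    have hxH : x ∈ H := (Finset.mem_union.1 hx).resolve_right hxF
    obtain rfl : s = x := by
      by_contra hsx
      have hst : s ∈ t := (mem_iff_of_mem_arrangements ht s).2 (by simp [hs, hsx])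
      exact asymm_of S (hlt s hst hxH hs) (hmin x (by simp [hxH, Ne.symm hsx]))
    exact .inl ⟨t, (cons_mem_pendingWords_of_mem_left hHF hs hmin).1 hp, rfl⟩
  · rintro (⟨t, ht, rfl⟩ | hp)
    · exact (cons_mem_pendingWords_of_mem_left hHF hs hmin).2 ht
    · exact hp.1

theorem cons_mem_pendingWords_insert (hH : ∀ a ∈ H, R a m) (hF : ∀ b ∈ F, R m b) :
    m :: t ∈ pendingWords R S H (insert m F) ↔ t ∈ pendingWords R S H F := by
  have hmH : m ∉ H := fun h => irrefl_of R m (hH m h)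
  have hmF : m ∉ F := fun h => irrefl_of R m (hF m h)
  have hset : (H ∪ insert m F).erase m = H ∪ F := by
    rw [Finset.union_insert, Finset.erase_insert (by simp [hmH, hmF])]
  rw [cons_mem_pendingWords, hset]
  constructor
  · rintro ⟨⟨-, ht⟩, ⟨-, htriple⟩, -, hpair⟩
    exact ⟨ht, htriple, hpair⟩
  · rintro ⟨ht, htriple, hpair⟩
    have mem_of_rel : ∀ y ∈ t, R y m → y ∈ H := fun y hy hym =>
      (Finset.mem_union.1 ((mem_iff_of_mem_arrangements ht y).1 hy)).resolve_right fun hyF =>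
        asymm_of R hym (hF y hyF)
    refine ⟨⟨by simp, ht⟩, ⟨?_, htriple⟩, fun y _ hm => absurd hm hmH, hpair⟩
    exact hpair.imp_of_mem fun hy hz h hym hzm => h (mem_of_rel _ hy hym) (mem_of_rel _ hz hzm)

theorem cons_mem_pendingWords_insert_iff_of_mem_right (hmF : ∀ b ∈ F, R m b)
    (hHF : ∀ a ∈ H, ∀ b ∈ F, R a b) (hx : x ∈ F) :
    x :: t ∈ pendingWords R S H (insert m F) ↔ x :: t ∈ pendingWords R S (insert m H) F := by
  have rel_of_mem : ∀ y ∈ insert m H, R y x := fun y hy => by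
    obtain rfl | hy := Finset.mem_insert.1 hy
    exacts [hmF x hx, hHF y hy x hx]
  have hxH : x ∉ insert m H := fun h => irrefl_of R x (rel_of_mem x h)
  have hset : H ∪ insert m F = insert m H ∪ F := by
    rw [Finset.union_insert, Finset.insert_union]
  rw [cons_mem_pendingWords, cons_mem_pendingWords, hset]
  refine and_congr_right fun _ => and_congr_right fun htriple => ?_
  constructor
  · rintro -
    exact ⟨fun _ _ h => absurd h hxH,
      htriple.1.imp fun h hy hz => h (rel_of_mem _ hy) (rel_of_mem _ hz)⟩
  · rintro ⟨-, hpair⟩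
    exact ⟨fun _ _ h => absurd (Finset.mem_insert_of_mem h) hxH,
      hpair.imp fun h hy hz => h (Finset.mem_insert_of_mem hy) (Finset.mem_insert_of_mem hz)⟩

theorem freshWords_insert_eq_union (hHm : ∀ a ∈ H, R a m) (hmF : ∀ b ∈ F, R m b)
    (hHF : ∀ a ∈ H, ∀ b ∈ F, R a b) :
    freshWords R S H (insert m F) =
      (m :: ·) '' pendingWords R S H F ∪ freshWords R S (insert m H) F := by
  ext p
  constructor
  · rintro ⟨hp, x, hx, hpx⟩
    obtain ⟨t, rfl⟩ := head?_eq_some_iff.1 hpx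
    obtain rfl | hxF := Finset.mem_insert.1 hx
    · exact .inl ⟨t, (cons_mem_pendingWords_insert hHm hmF).1 hp, rfl⟩
    · exact .inr ⟨(cons_mem_pendingWords_insert_iff_of_mem_right hmF hHF hxF).1 hp, x, hxF, hpx⟩
  · rintro (⟨t, ht, rfl⟩ | ⟨hp, x, hxF, hpx⟩)
    · exact cons_mem_freshWords.2 ⟨(cons_mem_pendingWords_insert hHm hmF).2 ht, by simp⟩
    · obtain ⟨t, rfl⟩ := head?_eq_some_iff.1 hpx
      exact ⟨(cons_mem_pendingWords_insert_iff_of_mem_right hmF hHF hxF).2 hp, x,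
        Finset.mem_insert_of_mem hxF, hpx⟩

theorem encard_pendingWords_eq_add [Std.Asymm S] (hHF : ∀ a ∈ H, ∀ b ∈ F, R a b) (hs : s ∈ H)
    (hmin : ∀ y ∈ H.erase s, S s y) :
    (pendingWords R S H F).encard =
      (pendingWords R S (H.erase s) F).encard + (freshWords R S H F).encard := by
  rw [pendingWords_eq_union hHF hs hmin, encard_image_cons_union_freshWords]
  exact fun h => irrefl_of R s (hHF s hs s h)

theorem encard_freshWords_insert (hHm : ∀ a ∈ H, R a m) (hmF : ∀ b ∈ F, R m b)
    (hHF : ∀ a ∈ H, ∀ b ∈ F, R a b) :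
    (freshWords R S H (insert m F)).encard =
      (pendingWords R S H F).encard + (freshWords R S (insert m H) F).encard := by
  rw [freshWords_insert_eq_union hHm hmF hHF, encard_image_cons_union_freshWords]
  exact fun h => irrefl_of R m (hmF m h)

end Asymm

variable [IsStrictTotalOrder α R] [IsStrictTotalOrder α S]

theorem encard_freshWords_eq_ballotPath {r : ℕ}
    (hr : ∀ H F : Finset α, F.card = r → (∀ a ∈ H, ∀ b ∈ F, R a b) →
      (pendingWords R S H F).encard = {d | BallotPath H.card r d}.encard)
    (hF : F.card = r + 1) (hHF : ∀ a ∈ H, ∀ b ∈ F, R a b) :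
    (freshWords R S H F).encard = {d | BallotPath (H.card + 1) r d}.encard := by
  obtain ⟨m, hm, hmF⟩ := exists_least R (Finset.card_pos.1 (by omega : 0 < F.card))
  have hHm : ∀ a ∈ H, R a m := fun a ha => hHF a ha m hm
  have hHF' : ∀ a ∈ insert m H, ∀ b ∈ F.erase m, R a b := fun a ha b hb => by
    obtain rfl | ha := Finset.mem_insert.1 ha
    exacts [hmF b hb, hHF a ha b (Finset.mem_of_mem_erase hb)]
  have hF' : (F.erase m).card = r := by rw [Finset.card_erase_of_mem hm, hF, Nat.add_sub_cancel]
  have hmH : (insert m H).card = H.card + 1 :=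
    Finset.card_insert_of_notMem fun h => irrefl_of R m (hHm m h)
  obtain ⟨s, hs, hmin⟩ := exists_least S (Finset.insert_nonempty m H)
  have hs_card : ((insert m H).erase s).card = H.card := by
    rw [Finset.card_erase_of_mem hs, hmH, Nat.add_sub_cancel]
  calc (freshWords R S H F).encard
      = (freshWords R S H (insert m (F.erase m))).encard := by rw [Finset.insert_erase hm]
    _ = (pendingWords R S H (F.erase m)).encard +
          (freshWords R S (insert m H) (F.erase m)).encard :=
        encard_freshWords_insert hHm hmF fun a ha => hHF' a (Finset.mem_insert_of_mem ha)
    _ = (pendingWords R S ((insert m H).erase s) (F.erase m)).encard +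
          (freshWords R S (insert m H) (F.erase m)).encard := by
        rw [hr _ _ hF' fun a ha => hHF' a (Finset.mem_insert_of_mem ha),
          hr _ _ hF' fun a ha => hHF' a (Finset.mem_of_mem_erase ha), hs_card]
    _ = (pendingWords R S (insert m H) (F.erase m)).encard :=
        (encard_pendingWords_eq_add hHF' hs hmin).symm
    _ = {d | BallotPath (H.card + 1) r d}.encard := by rw [hr _ _ hF' hHF', hmH]

theorem encard_pendingWords (hHF : ∀ a ∈ H, ∀ b ∈ F, R a b) :
    (pendingWords R S H F).encard = {d | BallotPath H.card F.card d}.encard := by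
  obtain ⟨r, hr⟩ : ∃ r, F.card = r := ⟨_, rfl⟩
  obtain ⟨h, hh⟩ : ∃ h, H.card = h := ⟨_, rfl⟩
  rw [hr, hh]
  induction r generalizing h H F with
  | zero =>
    obtain rfl := Finset.card_eq_zero.1 hr
    induction h generalizing H with
    | zero =>
      obtain rfl := Finset.card_eq_zero.1 hh
      rw [pendingWords_empty_empty, BallotPath.setOf_zero_zero, Set.encard_singleton,
        Set.encard_singleton]
    | succ h ih =>
      obtain ⟨s, hs, hmin⟩ := exists_least S (Finset.card_pos.1 (by omega : 0 < H.card))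
      have hs_card : (H.erase s).card = h := by rw [Finset.card_erase_of_mem hs]; omega
      rw [encard_pendingWords_eq_add hHF hs hmin, freshWords_empty_right, Set.encard_empty,
        add_zero, BallotPath.setOf_succ_zero, cons_injective.encard_image]
      exact ih hs_card (by simp)
  | succ r ihr =>
    have encard_freshWords : ∀ H : Finset α, (∀ a ∈ H, ∀ b ∈ F, R a b) →
        (freshWords R S H F).encard = {d | BallotPath (H.card + 1) r d}.encard :=
      fun H hHF => encard_freshWords_eq_ballotPath (fun H F hF hHF => ihr hHF hF _ rfl) hr hHF
    induction h generalizing H with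
    | zero =>
      obtain rfl := Finset.card_eq_zero.1 hh
      have hF : F.Nonempty := Finset.card_pos.1 (by omega)
      rw [pendingWords_empty_left hF, encard_freshWords ∅ hHF, BallotPath.setOf_zero_succ,
        cons_injective.encard_image, Finset.card_empty]
    | succ h ih =>
      obtain ⟨s, hs, hmin⟩ := exists_least S (Finset.card_pos.1 (by omega : 0 < H.card))
      have hs_card : (H.erase s).card = h := by rw [Finset.card_erase_of_mem hs]; omega
      rw [encard_pendingWords_eq_add hHF hs hmin, encard_freshWords H hHF, hh,
        BallotPath.encard_succ_succ, ih (fun a ha => hHF a (Finset.mem_of_mem_erase ha)) hs_card]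

theorem encard_arrangements_triplewise (R S : α → α → Prop) [IsStrictTotalOrder α R]
    [IsStrictTotalOrder α S] (F : Finset α) :
    {p ∈ arrangements F | p.Triplewise fun x y z => R y x → R z x → S y z}.encard =
      catalan F.card := by
  have set_eq : {p ∈ arrangements F | p.Triplewise fun x y z => R y x → R z x → S y z} =
      pendingWords R S ∅ F := by
    ext p
    simp [pendingWords, pairwise_of_forall]
  rw [set_eq, encard_pendingWords (by simp), Finset.card_empty, BallotPath.encard_zero]

end PatternAvoidance

section Patterns

open List

theorem orderIsoWord_cons_cons {x i : ℕ} {t σ : List ℕ} :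
    OrderIsoWord (x :: t) (i :: σ) ↔
      Forall₂ (fun y j => (x < y ↔ i < j) ∧ (y < x ↔ j < i)) t σ ∧ OrderIsoWord t σ := by
  rw [forall₂_iff_get]
  constructor
  · rintro ⟨hlen, h⟩
    have hlen : t.length = σ.length := by simpa using hlen
    refine ⟨⟨hlen, fun r hr hr' => ?_⟩, hlen, fun r s hr hs => ?_⟩
    · have hx := (h 0 (r + 1) (by simp) (by simpa using hr')).1
      have hx' := (h (r + 1) 0 (by simpa using hr') (by simp)).1
      exact ⟨by simpa [hr, hr'] using hx, by simpa [hr, hr'] using hx'⟩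
    · simpa using h (r + 1) (s + 1) (by simpa using hr) (by simpa using hs)
  · rintro ⟨⟨hlen, h⟩, -, hiso⟩
    have head_iff : ∀ r < σ.length, (x < t.getD r 0 ↔ i < σ.getD r 0) ∧
        (t.getD r 0 < x ↔ σ.getD r 0 < i) := fun r hr => by
      simpa [hr, hlen] using h r (hlen ▸ hr) hr
    refine ⟨by simpa using hlen, ?_⟩
    rintro (_ | r) (_ | s) hr hs
    · simp
    · have := head_iff s (by simpa using hs)
      simp only [getD_cons_zero, getD_cons_succ]
      omega
    · have := head_iff r (by simpa using hr)
      simp only [getD_cons_zero, getD_cons_succ]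
      omega
    · simpa using hiso r s (by simpa using hr) (by simpa using hs)

theorem orderIsoWord_nil : OrderIsoWord [] [] := by
  simp [OrderIsoWord]

theorem orderIsoWord_triple {x y z i j k : ℕ} : OrderIsoWord [x, y, z] [i, j, k] ↔
    ((x < y ↔ i < j) ∧ (y < x ↔ j < i)) ∧ ((x < z ↔ i < k) ∧ (z < x ↔ k < i)) ∧
      (y < z ↔ j < k) ∧ (z < y ↔ k < j) := by
  simp [orderIsoWord_cons_cons, orderIsoWord_nil, and_assoc]

theorem contains_triple {w : List ℕ} {i j k : ℕ} : Contains w [i, j, k] ↔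
    ∃ x y z, [x, y, z] <+ w ∧ OrderIsoWord [x, y, z] [i, j, k] := by
  constructor
  · rintro ⟨t, ht, hiso⟩
    obtain ⟨x, y, z, rfl⟩ := length_eq_three.1 hiso.1
    exact ⟨x, y, z, ht, hiso⟩
  · rintro ⟨x, y, z, ht, hiso⟩
    exact ⟨_, ht, hiso⟩

theorem orderIsoWord_double_middle {x y y' z i j k : ℕ} :
    OrderIsoWord [x, y, y', z] [i, j, j, k] ↔ y = y' ∧ OrderIsoWord [x, y, z] [i, j, k] := by
  simp only [orderIsoWord_cons_cons, orderIsoWord_nil, forall₂_cons, Forall₂.nil, and_true]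
  omega

theorem contains_double_middle {w : List ℕ} {i j k : ℕ} : Contains w [i, j, j, k] ↔
    ∃ x y z, [x, y, y, z] <+ w ∧ OrderIsoWord [x, y, z] [i, j, k] := by
  constructor
  · rintro ⟨t, ht, hiso⟩
    obtain ⟨x, y, y', z, rfl⟩ : ∃ x y y' z, t = [x, y, y', z] := by
      obtain ⟨x, t, rfl⟩ := exists_of_length_succ t hiso.1
      obtain ⟨y, y', z, rfl⟩ := length_eq_three.1 (Nat.succ_injective hiso.1)
      exact ⟨x, y, y', z, rfl⟩
    obtain ⟨rfl, hxyz⟩ := orderIsoWord_double_middle.1 hiso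
    exact ⟨x, y, z, ht, hxyz⟩
  · rintro ⟨x, y, z, ht, hiso⟩
    exact ⟨_, ht, orderIsoWord_double_middle.2 ⟨rfl, hiso⟩⟩

theorem IsNonnestingWord.contains_double_middle_iff {w : List ℕ} {i j k : ℕ}
    (hw : IsNonnestingWord w) (hij : i ≠ j) (hjk : j ≠ k) :
    Contains w [i, j, j, k] ↔ Contains w.dedup [i, j, k] := by
  rw [contains_double_middle, contains_triple]
  refine exists₃_congr fun x y z => and_congr_left fun hiso => ?_
  rw [orderIsoWord_triple] at hiso
  exact hw.sublist_iff_sublist_dedup (by omega) (by omega)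

theorem avoids_nested_iff {w : List ℕ} : Avoids w [1, 2, 2, 1] ∧ Avoids w [2, 1, 1, 2] ↔
    ∀ x y, x ≠ y → ¬ [x, y, y, x] <+ w := by
  simp only [Avoids, contains_double_middle, orderIsoWord_triple]
  constructor
  · rintro ⟨h₁, h₂⟩ x y hxy hs
    rcases hxy.lt_or_gt with hlt | hlt
    · exact h₁ ⟨x, y, x, hs, by omega⟩
    · exact h₂ ⟨x, y, x, hs, by omega⟩
  · intro h
    constructor <;> rintro ⟨x, y, z, hs, hiso⟩
    · obtain rfl : x = z := by omega
      exact h x y (by omega) hs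
    · obtain rfl : x = z := by omega
      exact h x y (by omega) hs

theorem isNonnesting_iff {n : ℕ} {w : List ℕ} :
    IsNonnesting n w ↔ IsNonnestingWord w ∧ w.dedup ∈ arrangements (Finset.Icc 1 n) := by
  rw [IsNonnesting, avoids_nested_iff]
  have mem_iff : w.dedup ∈ arrangements (Finset.Icc 1 n) ↔ ∀ x, x ∈ w ↔ 1 ≤ x ∧ x ≤ n := by
    simp [arrangements, nodup_dedup, Finset.ext_iff]
  rw [mem_iff]
  constructor
  · rintro ⟨hcount, hnest⟩
    have mem : ∀ x, x ∈ w ↔ 1 ≤ x ∧ x ≤ n := fun x => by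
      rw [← count_pos_iff, hcount x]
      split_ifs with hx <;> simp [hx]
    exact ⟨⟨fun x hx => (hcount x).trans (if_pos ((mem x).1 hx)), hnest⟩, mem⟩
  · rintro ⟨hw, mem⟩
    refine ⟨fun x => ?_, hw.not_nested⟩
    split_ifs with hx
    · exact hw.count_eq_two x ((mem x).2 hx)
    · exact count_eq_zero.2 fun h => hx ((mem x).1 h)

theorem triplewise_iff_forall_sublist_s15 {α : Type*} {P : α → α → α → Prop} {l : List α} :
    l.Triplewise P ↔ ∀ x y z, [x, y, z] <+ l → P x y z := by
  induction l with
  | nil => simp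
  | cons a l ih =>
    rw [triplewise_cons, ih, pairwise_iff_forall_sublist]
    constructor
    · rintro ⟨hpair, htriple⟩ x y z h
      rcases sublist_cons_iff.1 h with h | ⟨_, e, h⟩
      · exact htriple x y z h
      · obtain ⟨rfl, rfl⟩ := cons_eq_cons.1 e
        exact hpair h
    · intro h
      exact ⟨fun hyz => h _ _ _ (hyz.cons_cons a), fun x y z hs => h x y z (hs.cons a)⟩

theorem avoids_triple_iff {p : List ℕ} {i j k : ℕ} : Avoids p [i, j, k] ↔
    ∀ x y z, [x, y, z] <+ p → ¬ OrderIsoWord [x, y, z] [i, j, k] := by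
  simp only [Avoids, contains_triple, not_exists, not_and]

theorem avoids_reverse {p : List ℕ} {i j k : ℕ} :
    Avoids p.reverse [i, j, k] ↔ Avoids p [k, j, i] := by
  simp only [avoids_triple_iff, ← triplewise_iff_forall_sublist_s15, triplewise_reverse]
  have iso_swap : ∀ x y z, OrderIsoWord [z, y, x] [i, j, k] ↔ OrderIsoWord [x, y, z] [k, j, i] := by
    simp only [orderIsoWord_triple]
    omega
  simp only [iso_swap]

theorem avoids_iff_triplewise {R S : ℕ → ℕ → Prop} {p : List ℕ} {i j k : ℕ} (hp : p.Nodup)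
    (hRS : ∀ x y z, y ≠ z → (OrderIsoWord [x, y, z] [i, j, k] ↔ R y x ∧ R z x ∧ ¬ S y z)) :
    Avoids p [i, j, k] ↔ p.Triplewise fun x y z => R y x → R z x → S y z := by
  rw [avoids_triple_iff, triplewise_iff_forall_sublist_s15]
  refine forall₃_congr fun x y z => forall_congr' fun hs => ?_
  have hyz : y ≠ z := by simpa using nodup_cons.1 (hp.sublist hs) |>.2
  rw [hRS x y z hyz]
  tauto

theorem encard_arrangements_avoids_of_relations (R S : ℕ → ℕ → Prop) [IsStrictTotalOrder ℕ R]
    [IsStrictTotalOrder ℕ S] {i j k : ℕ}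
    (hRS : ∀ x y z, y ≠ z → (OrderIsoWord [x, y, z] [i, j, k] ↔ R y x ∧ R z x ∧ ¬ S y z))
    (F : Finset ℕ) : {p ∈ arrangements F | Avoids p [i, j, k]}.encard = catalan F.card := by
  rw [← encard_arrangements_triplewise R S F]
  congr 1
  ext p
  exact and_congr_right fun hp => avoids_iff_triplewise hp.1 hRS

theorem encard_arrangements_avoids_of_extreme_head {i j k : ℕ} (hjk : j ≠ k)
    (hi : j < i ∧ k < i ∨ i < j ∧ i < k) (F : Finset ℕ) :
    {p ∈ arrangements F | Avoids p [i, j, k]}.encard = catalan F.card := by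
  rcases hi with hi | hi <;> rcases hjk.lt_or_gt with hlt | hlt
  · exact encard_arrangements_avoids_of_relations (· < ·) (· > ·)
      (by simp only [orderIsoWord_triple]; omega) F
  · exact encard_arrangements_avoids_of_relations (· < ·) (· < ·)
      (by simp only [orderIsoWord_triple]; omega) F
  · exact encard_arrangements_avoids_of_relations (· > ·) (· > ·)
      (by simp only [orderIsoWord_triple]; omega) F
  · exact encard_arrangements_avoids_of_relations (· > ·) (· < ·)
      (by simp only [orderIsoWord_triple]; omega) F

theorem reverse_mem_arrangements {α : Type*} [DecidableEq α] {G : Finset α} {p : List α} :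
    p.reverse ∈ arrangements G ↔ p ∈ arrangements G := by
  simp [arrangements]

theorem encard_arrangements_avoids {i j k : ℕ} (hij : i ≠ j) (hik : i ≠ k) (hjk : j ≠ k)
    (F : Finset ℕ) : {p ∈ arrangements F | Avoids p [i, j, k]}.encard = catalan F.card := by
  by_cases hi : j < i ∧ k < i ∨ i < j ∧ i < k
  · exact encard_arrangements_avoids_of_extreme_head hjk hi F
  · have hk : j < k ∧ i < k ∨ k < j ∧ k < i := by omega
    rw [← encard_arrangements_avoids_of_extreme_head hij.symm hk F,
      ← Set.encard_preimage_of_bijective reverse_involutive.bijective]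
    congr 1
    ext p
    exact and_congr reverse_mem_arrangements avoids_reverse

end Patterns

theorem nonnesting_avoid_ijjk (n : ℕ) (hn : 1 ≤ n) (i j k : ℕ)
    (hijk : [i, j, k].Perm [1, 2, 3]) :
    {w : List ℕ | IsNonnesting n w ∧ Avoids w [i, j, j, k]}.ncard =
      (catalan n) ^ 2 := by
  obtain ⟨⟨hij, hik⟩, hjk⟩ : (i ≠ j ∧ i ≠ k) ∧ j ≠ k := by
    simpa using hijk.nodup_iff.2 (by decide)
  set A := {p ∈ arrangements (Finset.Icc 1 n) | Avoids p [i, j, k]}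
  have length_eq : ∀ p ∈ A, p.Nodup ∧ p.length = n := fun p ⟨⟨hnodup, hset⟩, _⟩ =>
    ⟨hnodup, by rw [← List.toFinset_card_of_nodup hnodup, hset, Nat.card_Icc, Nat.add_sub_cancel]⟩
  have set_eq : {w | IsNonnesting n w ∧ Avoids w [i, j, j, k]} =
      {w | IsNonnestingWord w ∧ w.dedup ∈ A} := by
    ext w
    rw [Set.mem_ofPred_eq, isNonnesting_iff, and_assoc]
    exact and_congr_right fun hw => and_congr_right fun _ =>
      not_congr (hw.contains_double_middle_iff hij hjk)
  rw [Set.ncard, set_eq, encard_isNonnestingWord_dedup_mem length_eq,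
    encard_arrangements_avoids hij hik hjk, Nat.card_Icc, Nat.add_sub_cancel, sq]
  rfl
end

section
/- For all n ≥ 1, the number of nonnesting permutations of the multiset {1,1,2,2,…,n,n} that avoid all three patterns 1123, 1322, and 2331 equals C_{n+1} − 1, where C_{n+1} is the (n+1)st Catalan number. -/
/-! The first copies of the letters of a nonnesting word and the second copies spell the same
permutation `π`, so that the word is a shuffle of `π` with itself along a Dyck path, in which up
steps stand for first copies. A subword `x y z` of `π` puts `x x y z`, `x y y z` and `x y z z` into
the word; avoiding the three patterns therefore leaves no `x < y` in `π` except with `y` its last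
letter, i.e. `π = m + j + 1, …, j + 2, j, …, 1, j + 1`.

Conversely, shuffles of such a `π` can only contain `1322`, with `22` the two copies of `j + 1`.
They avoid it if and only if the path is back at height `0` just before its up step number `m + 1`,
or consists of ups followed by downs from that step on. The former paths number `C_m C_{j+1}`. The
latter, if they are not of the former kind, are determined by the part before that step, so their
number `e_m` does not depend on `j`; for `j = 0` every path qualifies, whence
`e_m = C_{m+1} - C_m`. Summed over `m + j = N` for `n = N + 1`, the products give
`C_{N+2} - C_{N+1}` by the Catalan recurrence and the `e_m` telescope to `C_{N+1} - 1`. -/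

namespace NonnestingWord

open DyckStep List
open Finset.HasAntidiagonal (antidiagonal)

/-! ### Patterns -/

theorem contains_iff_exists_strictMonoOn {w σ : List ℕ} :
    Contains w σ ↔ ∃ f : ℕ → ℕ, StrictMonoOn f {x | x ∈ σ} ∧ σ.map f <+ w := by
  constructor
  · rintro ⟨t, htw, hlen, ht⟩
    have hidx {x : ℕ} (hx : x ∈ σ) : σ.getD (σ.idxOf x) 0 = x := by
      rw [getD_eq_getElem _ _ (idxOf_lt_length_of_mem hx), getElem_idxOf]
    refine ⟨fun x ↦ t.getD (σ.idxOf x) 0, fun x hx y hy hxy ↦ ?_, ?_⟩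
    · refine (ht _ _ (idxOf_lt_length_of_mem hx) (idxOf_lt_length_of_mem hy)).1.2 ?_
      rwa [hidx hx, hidx hy]
    · convert htw
      refine ext_getElem (by simp [hlen]) fun i hi hi' ↦ ?_
      have hiσ : i < σ.length := hlen ▸ hi'
      rw [getElem_map, ← getD_eq_getElem t 0 hi']
      refine (ht _ _ (idxOf_lt_length_of_mem (getElem_mem hiσ)) hiσ).2.2 ?_
      rw [hidx (getElem_mem hiσ), getD_eq_getElem _ _ hiσ]
  · rintro ⟨f, hf, hw⟩
    refine ⟨σ.map f, hw, length_map f, fun r s hr hs ↦ ?_⟩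
    have hr' : σ[r] ∈ σ := getElem_mem hr
    have hs' : σ[s] ∈ σ := getElem_mem hs
    simpa [hr, hs] using ⟨hf.lt_iff_lt hr' hs', hf.eq_iff_eq hr' hs'⟩

theorem contains_iff_exists_lt {w σ : List ℕ} (hσ : ∀ x, x ∈ σ ↔ x = 1 ∨ x = 2) :
    Contains w σ ↔ ∃ a b, a < b ∧ σ.map (fun x ↦ if x = 1 then a else b) <+ w := by
  rw [contains_iff_exists_strictMonoOn]
  constructor
  · rintro ⟨f, hf, hw⟩
    refine ⟨f 1, f 2, hf (by simp [hσ]) (by simp [hσ]) one_lt_two, ?_⟩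
    convert hw using 1
    refine map_congr_left fun x hx ↦ ?_
    obtain rfl | rfl := (hσ x).1 hx <;> rfl
  · rintro ⟨a, b, hab, hw⟩
    refine ⟨_, fun x hx y hy hxy ↦ ?_, hw⟩
    have := (hσ x).1 hx
    have := (hσ y).1 hy
    grind

theorem contains_iff_exists_lt_lt {w σ : List ℕ} (hσ : ∀ x, x ∈ σ ↔ x = 1 ∨ x = 2 ∨ x = 3) :
    Contains w σ ↔ ∃ a b, a < b ∧ ∃ c, b < c ∧
      σ.map (fun x ↦ if x = 1 then a else if x = 2 then b else c) <+ w := by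
  rw [contains_iff_exists_strictMonoOn]
  constructor
  · rintro ⟨f, hf, hw⟩
    refine ⟨f 1, f 2, hf (by simp [hσ]) (by simp [hσ]) (by simp),
      f 3, hf (by simp [hσ]) (by simp [hσ]) (by simp), ?_⟩
    convert hw using 1
    refine map_congr_left fun x hx ↦ ?_
    obtain rfl | rfl | rfl := (hσ x).1 hx <;> rfl
  · rintro ⟨a, b, hab, c, hbc, hw⟩
    refine ⟨_, fun x hx y hy hxy ↦ ?_, hw⟩
    have := (hσ x).1 hx
    have := (hσ y).1 hy
    grind

theorem isNonnesting_iff {n : ℕ} {w : List ℕ} :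
    IsNonnesting n w ↔ IsMultisetPerm n w ∧ ∀ x y, x ≠ y → ¬ [x, y, y, x] <+ w := by
  have h₁ : Avoids w [1, 2, 2, 1] ↔ ∀ a b, a < b → ¬ [a, b, b, a] <+ w := by
    rw [Avoids, contains_iff_exists_lt (by grind)]
    simp
  have h₂ : Avoids w [2, 1, 1, 2] ↔ ∀ a b, a < b → ¬ [b, a, a, b] <+ w := by
    rw [Avoids, contains_iff_exists_lt (by grind)]
    simp
  rw [IsNonnesting, h₁, h₂]
  refine and_congr_right fun _ ↦ ⟨fun ⟨h, h'⟩ x y hxy ↦ ?_,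
    fun h ↦ ⟨fun a b hab ↦ h a b hab.ne, fun a b hab ↦ h b a hab.ne'⟩⟩
  exact hxy.lt_or_gt.elim (h x y) (h' y x)

theorem avoids_1123_iff {w : List ℕ} :
    Avoids w [1, 1, 2, 3] ↔ ∀ a b, a < b → ∀ c, b < c → ¬ [a, a, b, c] <+ w := by
  rw [Avoids, contains_iff_exists_lt_lt (by grind)]
  simp

theorem avoids_1322_iff {w : List ℕ} :
    Avoids w [1, 3, 2, 2] ↔ ∀ a b, a < b → ∀ c, b < c → ¬ [a, c, b, b] <+ w := by
  rw [Avoids, contains_iff_exists_lt_lt (by grind)]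
  simp

theorem avoids_2331_iff {w : List ℕ} :
    Avoids w [2, 3, 3, 1] ↔ ∀ a b, a < b → ∀ c, b < c → ¬ [b, c, c, a] <+ w := by
  rw [Avoids, contains_iff_exists_lt_lt (by grind)]
  simp

/-! ### Dyck paths -/

/-- The lattice path `d`, started at height `h`, never goes below height `0`. -/
def IsBallot : ℕ → List DyckStep → Prop
  | _, [] => True
  | h, U :: d => IsBallot (h + 1) d
  | 0, D :: _ => False
  | h + 1, D :: d => IsBallot h d

/-- Dyck paths of semilength `n`, as bare lists of steps (Mathlib's `DyckWord` is a bundled version,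
whose concatenations and prefixes are awkward to count). -/
def dyckPaths (n : ℕ) : Set (List DyckStep) :=
  {d | IsBallot 0 d ∧ d.count U = n ∧ d.count D = n}

theorem isBallot_iff_forall_take {h : ℕ} {d : List DyckStep} :
    IsBallot h d ↔ ∀ i, (d.take i).count D ≤ h + (d.take i).count U := by
  induction d generalizing h with
  | nil => simp [IsBallot]
  | cons s d ih =>
    rw [← Nat.and_forall_add_one]
    cases s with
    | U => simp [IsBallot, ih, add_assoc, add_comm 1]
    | D =>
      cases h with
      | zero => simpa [IsBallot] using ⟨0, by simp⟩
      | succ h => simp [IsBallot, ih, add_right_comm h 1]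

theorem isBallot_append {h k : ℕ} {p r : List DyckStep} (hk : h + p.count U = k + p.count D) :
    IsBallot h (p ++ r) ↔ IsBallot h p ∧ IsBallot k r := by
  induction p generalizing h with
  | nil =>
    obtain rfl : h = k := by simpa using hk
    simp [IsBallot]
  | cons s p ih =>
    cases s with
    | U => exact ih (h := h + 1) (by grind)
    | D =>
      cases h with
      | zero => simp [IsBallot]
      | succ h => exact ih (h := h) (by grind)

theorem IsBallot.count_D_le {h : ℕ} {p r : List DyckStep} (hp : IsBallot h (p ++ r)) :
    p.count D ≤ h + p.count U := by
  simpa using isBallot_iff_forall_take.1 hp p.length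

theorem isBallot_replicate_U_append {h i : ℕ} {d : List DyckStep} :
    IsBallot h (replicate i U ++ d) ↔ IsBallot (h + i) d := by
  rw [isBallot_append (k := h + i) (by simp [count_replicate])]
  refine and_iff_right (isBallot_iff_forall_take.2 fun k ↦ ?_)
  simp [take_replicate, count_replicate]

theorem isBallot_replicate_D {h i : ℕ} : IsBallot h (replicate i D) ↔ i ≤ h := by
  induction i generalizing h with
  | zero => simp [IsBallot]
  | succ i ih => cases h <;> simp [replicate_succ, IsBallot, ih]

theorem length_eq_count_U_add_count_D (d : List DyckStep) : d.length = d.count U + d.count D := by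
  induction d with
  | nil => rfl
  | cons s d ih => cases s <;> simp [ih] <;> lia

theorem dyckPaths_eq_range (n : ℕ) :
    dyckPaths n = Set.range fun p : {p : DyckWord // p.semilength = n} ↦ p.1.toList := by
  ext d
  constructor
  · rintro ⟨hd, hU, hD⟩
    exact ⟨⟨⟨d, hU.trans hD.symm, by simpa using isBallot_iff_forall_take.1 hd⟩, hU⟩, rfl⟩
  · rintro ⟨⟨p, rfl⟩, rfl⟩
    exact ⟨isBallot_iff_forall_take.2 (by simpa using p.count_D_le_count_U), rfl,
      p.semilength_eq_count_D.symm⟩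

theorem finite_dyckPaths (n : ℕ) : (dyckPaths n).Finite := by
  rw [dyckPaths_eq_range]
  exact Set.finite_range _

theorem ncard_dyckPaths (n : ℕ) : (dyckPaths n).ncard = catalan n := by
  rw [dyckPaths_eq_range, ← Set.image_univ, Set.ncard_image_of_injective, Set.ncard_univ,
    Nat.card_eq_fintype_card, DyckWord.card_dyckWord_semilength_eq_catalan]
  exact fun p q h ↦ Subtype.ext (DyckWord.ext h)

theorem append_mem_dyckPaths {m n : ℕ} {p q : List DyckStep} (hp : p ∈ dyckPaths m) :
    p ++ q ∈ dyckPaths (m + n) ↔ q ∈ dyckPaths n := by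
  obtain ⟨hb, hU, hD⟩ := hp
  simp [dyckPaths, isBallot_append (h := 0) (k := 0) (p := p) (by lia), hb, hU, hD]

section SplitAtCount

variable {α : Type*} [DecidableEq α] {a : α}

theorem exists_eq_append_cons_of_lt_count {l : List α} {m : ℕ} (hm : m < l.count a) :
    ∃ p r, l = p ++ a :: r ∧ p.count a = m := by
  induction l generalizing m with
  | nil => simp at hm
  | cons b l ih =>
    by_cases hb : b = a
    · subst hb
      cases m with
      | zero => exact ⟨[], l, rfl, rfl⟩
      | succ m =>
        obtain ⟨p, r, rfl, rfl⟩ := ih (m := m) (by simpa using hm)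
        exact ⟨b :: p, r, rfl, by simp⟩
    · obtain ⟨p, r, rfl, rfl⟩ := ih (m := m) (by simpa [hb] using hm)
      exact ⟨b :: p, r, rfl, by simp [hb]⟩

theorem append_cons_inj_of_count_eq {p p' r r' : List α} (hp : p.count a = p'.count a) :
    p ++ a :: r = p' ++ a :: r' ↔ p = p' ∧ r = r' := by
  refine ⟨fun h ↦ ?_, by rintro ⟨rfl, rfl⟩; rfl⟩
  induction p generalizing p' with
  | nil =>
    cases p' with
    | nil => simpa using h
    | cons b p' =>
      obtain ⟨rfl, -⟩ : a = b ∧ r = p' ++ a :: r' := by simpa using h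
      simp at hp
  | cons b p ih =>
    cases p' with
    | nil =>
      obtain ⟨rfl, -⟩ : b = a ∧ p ++ a :: r = r' := by simpa using h
      simp at hp
    | cons b' p' =>
      obtain ⟨rfl, hpr⟩ : b = b' ∧ p ++ a :: r = p' ++ a :: r' := by simpa using h
      simpa using ih (by simpa [count_cons] using hp) hpr

end SplitAtCount

theorem not_DU_sublist_iff {r : List DyckStep} :
    ¬ [D, U] <+ r ↔ r = replicate (r.count U) U ++ replicate (r.count D) D := by
  induction r with
  | nil => simp
  | cons s r ih =>
    cases s with
    | U => simp [sublist_cons_iff, replicate_succ, ih]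
    | D =>
      rw [cons_sublist_cons, singleton_sublist]
      constructor
      · intro hU
        have hr := ih.1 fun h ↦ hU (h.subset (by simp))
        rw [count_eq_zero.2 hU] at hr
        simpa [count_eq_zero.2 hU, replicate_succ] using hr
      · intro hr hU
        obtain ⟨i, hi⟩ := Nat.exists_eq_succ_of_ne_zero (count_pos_iff.2 hU).ne'
        simp [hi, replicate_succ] at hr

/-- Dyck paths that are at height `0` just before their `(m + 1)`-st up step or consist of ups
followed by downs after it. These are the paths that occur in the words of the theorem when the
first copies of the letters spell `pivotPerm m j`. -/
def admissiblePaths (m j : ℕ) : Set (List DyckStep) :=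
  {d ∈ dyckPaths (m + j + 1) |
    ∃ p r, d = p ++ U :: r ∧ p.count U = m ∧ (p.count D = m ∨ ¬ [D, U] <+ r)}

/-- Initial segments of Dyck paths with `m` up steps that end at positive height. -/
def elevatedPrefixes (m : ℕ) : Set (List DyckStep) :=
  {p | IsBallot 0 p ∧ p.count U = m ∧ p.count D < m}

/-- Extends `p` to a Dyck path by `j + 1` up steps followed by down steps. -/
def completion (j : ℕ) (p : List DyckStep) : List DyckStep :=
  p ++ U :: (replicate j U ++ replicate (p.count U + j + 1 - p.count D) D)

theorem completion_mem_admissiblePaths {m j : ℕ} {p : List DyckStep} (hp : p ∈ elevatedPrefixes m) :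
    completion j p ∈ admissiblePaths m j := by
  obtain ⟨hb, hU, hD⟩ := hp
  refine ⟨⟨?_, ?_, ?_⟩, p, _, rfl, hU, .inr (not_DU_sublist_iff.2 ?_)⟩
  · rw [completion, isBallot_append (k := m - p.count D) (by lia), IsBallot,
      isBallot_replicate_U_append, isBallot_replicate_D]
    exact ⟨hb, by lia⟩
  · simp [completion, count_replicate]
    lia
  · simp [completion, count_replicate]
    lia
  · simp [count_replicate]

theorem append_mem_admissiblePaths {m j : ℕ} {p q : List DyckStep} (hp : p ∈ dyckPaths m)
    (hq : q ∈ dyckPaths (j + 1)) : p ++ q ∈ admissiblePaths m j := by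
  refine ⟨(append_mem_dyckPaths hp).2 hq, ?_⟩
  cases q with
  | nil => simp [dyckPaths] at hq
  | cons s r =>
    cases s with
    | U => exact ⟨p, r, rfl, hp.2.1, .inl hp.2.2⟩
    | D => exact hq.1.elim

theorem admissiblePaths_eq_union (m j : ℕ) :
    admissiblePaths m j = (fun x ↦ x.1 ++ x.2) '' (dyckPaths m ×ˢ dyckPaths (j + 1)) ∪
      completion j '' elevatedPrefixes m := by
  refine Set.Subset.antisymm ?_ (Set.union_subset ?_ ?_)
  · rintro _ ⟨hd, p, r, rfl, hU, hpr⟩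
    have hp : IsBallot 0 p := ((isBallot_append (k := m - p.count D)
      (by have := hd.1.count_D_le; lia)).1 hd.1).1
    by_cases hD : p.count D = m
    · have hp' : p ∈ dyckPaths m := ⟨hp, hU, hD⟩
      exact .inl ⟨(p, U :: r), ⟨hp', (append_mem_dyckPaths hp').1 hd⟩, rfl⟩
    · refine .inr ⟨p, ⟨hp, hU, by have := hd.1.count_D_le; lia⟩, ?_⟩
      have hUr : r.count U = j := by grind [hd.2.1]
      have hDr : r.count D = p.count U + j + 1 - p.count D := by grind [hd.2.2]
      rw [completion, ← hDr, ← hUr, ← not_DU_sublist_iff.1 (hpr.resolve_left hD)]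
  · rintro _ ⟨⟨p, q⟩, ⟨hp, hq⟩, rfl⟩
    exact append_mem_admissiblePaths hp hq
  · rintro _ ⟨p, hp, rfl⟩
    exact completion_mem_admissiblePaths hp

theorem completion_injOn (m j : ℕ) : Set.InjOn (completion j) (elevatedPrefixes m) := by
  rintro p ⟨-, hp, -⟩ q ⟨-, hq, -⟩ h
  exact ((append_cons_inj_of_count_eq (hp.trans hq.symm)).1 h).1

theorem append_injOn_dyckPaths (m : ℕ) (s : Set (List DyckStep)) :
    Set.InjOn (fun x : List DyckStep × List DyckStep ↦ x.1 ++ x.2) (dyckPaths m ×ˢ s) := by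
  rintro ⟨p, q⟩ ⟨⟨-, hU, hD⟩, -⟩ ⟨p', q'⟩ ⟨⟨-, hU', hD'⟩, -⟩ h
  refine Prod.ext_iff.2 (append_inj h ?_)
  simp only [length_eq_count_U_add_count_D] at *
  lia

theorem finite_admissiblePaths (m j : ℕ) : (admissiblePaths m j).Finite :=
  (finite_dyckPaths _).subset (Set.sep_subset _ _)

theorem ncard_admissiblePaths_eq_add_ncard_elevatedPrefixes (m j : ℕ) :
    (admissiblePaths m j).ncard =
      catalan m * catalan (j + 1) + (elevatedPrefixes m).ncard := by
  have hfin := finite_admissiblePaths m j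
  rw [admissiblePaths_eq_union, Set.finite_union] at hfin
  rw [admissiblePaths_eq_union, Set.ncard_union_eq ?_ hfin.1 hfin.2,
    (append_injOn_dyckPaths m _).ncard_image, (completion_injOn m j).ncard_image, Set.ncard_prod,
    ncard_dyckPaths, ncard_dyckPaths]
  rw [Set.disjoint_left]
  rintro _ ⟨⟨p, q⟩, ⟨hp, hq⟩, rfl⟩ ⟨p', hp', h⟩
  match q with
  | [] => simp [dyckPaths] at hq
  | D :: _ => exact hq.1.elim
  | U :: r =>
    obtain ⟨rfl, -⟩ := (append_cons_inj_of_count_eq (hp'.2.1.trans hp.2.1.symm)).1 h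
    exact hp'.2.2.ne hp.2.2

theorem admissiblePaths_zero_right (m : ℕ) : admissiblePaths m 0 = dyckPaths (m + 1) := by
  refine Set.sep_eq_self_iff_mem_true.2 fun d hd ↦ ?_
  obtain ⟨p, r, rfl, hp⟩ := exists_eq_append_cons_of_lt_count (a := U) (m := m) (by
    rw [hd.2.1]
    lia)
  refine ⟨p, r, rfl, hp, .inr fun h ↦ ?_⟩
  have hr : r.count U = 0 := by grind [hd.2.1]
  exact count_eq_zero.1 hr (h.subset (by simp))

theorem ncard_elevatedPrefixes_add_catalan (m : ℕ) :
    (elevatedPrefixes m).ncard + catalan m = catalan (m + 1) := by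
  have h := ncard_admissiblePaths_eq_add_ncard_elevatedPrefixes m 0
  rw [admissiblePaths_zero_right, ncard_dyckPaths, zero_add, catalan_one, mul_one] at h
  lia

theorem sum_ncard_elevatedPrefixes (N : ℕ) :
    ∑ m ∈ Finset.range N, (elevatedPrefixes m).ncard + 1 = catalan N := by
  induction N with
  | zero => simp
  | succ N ih =>
    rw [Finset.sum_range_succ, ← ncard_elevatedPrefixes_add_catalan]
    lia

theorem sum_ncard_admissiblePaths (N : ℕ) :
    ∑ x ∈ antidiagonal N, (admissiblePaths x.1 x.2).ncard = catalan (N + 2) - 1 := by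
  have hA := sum_ncard_elevatedPrefixes (N + 1)
  have hC : catalan (N + 2) =
      catalan (N + 1) + ∑ x ∈ antidiagonal N, catalan x.1 * catalan (x.2 + 1) := by
    rw [catalan_succ', Finset.Nat.sum_antidiagonal_succ', catalan_zero, mul_one]
  simp only [ncard_admissiblePaths_eq_add_ncard_elevatedPrefixes, Finset.sum_add_distrib]
  rw [Finset.Nat.sum_antidiagonal_eq_sum_range_succ_mk (fun x ↦ (elevatedPrefixes x.1).ncard)]
  simp only
  lia

/-! ### Shuffles along paths -/

section Shuffles

variable {α : Type*}

/-- `Weave d l r w` says that the word `w` is the shuffle of `l` and `r` along the path `d`: a step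
`U` takes the next letter from `l`, a step `D` takes it from `r`. -/
inductive Weave : List DyckStep → List α → List α → List α → Prop
  | nil : Weave [] [] [] []
  | up {d l r w} (x : α) : Weave d l r w → Weave (U :: d) (x :: l) r (x :: w)
  | down {d l r w} (x : α) : Weave d l r w → Weave (D :: d) l (x :: r) (x :: w)

/-- The shuffle of `l` and `r` along `d` as a function; it breaks off if `d` asks for a
letter from an exhausted word. -/
def weave : List DyckStep → List α → List α → List α
  | U :: d, x :: l, r => x :: weave d l r
  | D :: d, l, x :: r => x :: weave d l r
  | _, _, _ => []

theorem weave_spec {d : List DyckStep} {l r : List α} (hl : d.count U = l.length)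
    (hr : d.count D = r.length) : Weave d l r (weave d l r) := by
  induction d generalizing l r with
  | nil =>
    obtain rfl := eq_nil_of_length_eq_zero hl.symm
    obtain rfl := eq_nil_of_length_eq_zero hr.symm
    exact .nil
  | cons s d ih =>
    cases s with
    | U =>
      cases l with
      | nil => simp at hl
      | cons x l => exact .up x (ih (by simpa using hl) (by simpa using hr))
    | D =>
      cases r with
      | nil => simp at hr
      | cons x r => exact .down x (ih (by simpa using hl) (by simpa using hr))

theorem sublist_asymm {l : List α} (hl : l.Nodup) {x y : α} (hxy : [x, y] <+ l) :
    ¬ [y, x] <+ l := by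
  induction l with
  | nil => simp at hxy
  | cons z l ih =>
    simp only [sublist_cons_iff, cons.injEq, nodup_cons] at *
    grind

theorem sublist_of_cons_sublist_append {x : α} {t l₁ l₂ : List α} (hx : x ∉ l₁)
    (h : x :: t <+ l₁ ++ l₂) : x :: t <+ l₂ := by
  induction l₁ with
  | nil => exact h
  | cons y l ih =>
    obtain ⟨hxy, hx⟩ := not_or.1 (mem_cons.not.1 hx)
    rcases sublist_cons_iff.1 h with h | ⟨s, hs, -⟩
    · exact ih hx h
    · exact absurd (cons_eq_cons.1 hs).1 hxy

namespace Weave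

variable {d d' p s : List DyckStep} {l l' r r' w t u A B : List α} {c k x y : α}

theorem weave_eq (h : Weave d l r w) : weave d l r = w := by
  induction h with
  | nil => rfl
  | up x _ ih => rw [weave, ih]
  | down x _ ih => rw [weave, ih]

theorem count_U (h : Weave d l r w) : d.count U = l.length := by
  induction h <;> simp [*]

theorem count_D (h : Weave d l r w) : d.count D = r.length := by
  induction h <;> simp [*]

theorem perm (h : Weave d l r w) : w ~ l ++ r := by
  induction h with
  | nil => rfl
  | up x _ ih => exact ih.cons x
  | down x _ ih => exact (ih.cons x).trans perm_middle.symm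

theorem left_sublist (h : Weave d l r w) : l <+ w := by
  induction h with
  | nil => rfl
  | up x _ ih => exact ih.cons_cons x
  | down x _ ih => exact ih.cons x

theorem right_sublist (h : Weave d l r w) : r <+ w := by
  induction h with
  | nil => rfl
  | up x _ ih => exact ih.cons x
  | down x _ ih => exact ih.cons_cons x

theorem split (h : Weave (p ++ s) l r w) :
    ∃ l₁ l₂ r₁ r₂ w₁ w₂, l = l₁ ++ l₂ ∧ r = r₁ ++ r₂ ∧ w = w₁ ++ w₂ ∧
      Weave p l₁ r₁ w₁ ∧ Weave s l₂ r₂ w₂ := by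
  induction p generalizing l r w with
  | nil => exact ⟨[], l, [], r, [], w, rfl, rfl, rfl, .nil, h⟩
  | cons a p ih =>
    cases h with
    | up x h =>
      obtain ⟨l₁, l₂, r₁, r₂, w₁, w₂, rfl, rfl, rfl, h₁, h₂⟩ := ih h
      exact ⟨x :: l₁, l₂, r₁, r₂, x :: w₁, w₂, rfl, rfl, rfl, h₁.up x, h₂⟩
    | down x h =>
      obtain ⟨l₁, l₂, r₁, r₂, w₁, w₂, rfl, rfl, rfl, h₁, h₂⟩ := ih h
      exact ⟨l₁, l₂, x :: r₁, r₂, x :: w₁, w₂, rfl, rfl, rfl, h₁.down x, h₂⟩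

theorem exists_of_sublist (h : Weave d l r w) (ht : t <+ w) :
    ∃ d' l' r', d' <+ d ∧ l' <+ l ∧ r' <+ r ∧ Weave d' l' r' t := by
  induction h generalizing t with
  | nil => exact ⟨[], [], [], .slnil, .slnil, .slnil, sublist_nil.1 ht ▸ .nil⟩
  | up x _ ih =>
    rcases sublist_cons_iff.1 ht with hs | ⟨s, rfl, hs⟩ <;>
      obtain ⟨d', l', r', hd, hl, hr, h'⟩ := ih hs
    · exact ⟨d', l', r', hd.cons _, hl.cons _, hr, h'⟩
    · exact ⟨U :: d', x :: l', r', hd.cons_cons _, hl.cons_cons _, hr, h'.up x⟩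
  | down x _ ih =>
    rcases sublist_cons_iff.1 ht with hs | ⟨s, rfl, hs⟩ <;>
      obtain ⟨d', l', r', hd, hl, hr, h'⟩ := ih hs
    · exact ⟨d', l', r', hd.cons _, hl, hr.cons _, h'⟩
    · exact ⟨D :: d', l', x :: r', hd.cons_cons _, hl, hr.cons_cons _, h'.down x⟩

theorem append_cons_cons_sublist (h : Weave d l r w) (hl : u ++ x :: t <+ l)
    (hr : u ++ x :: t <+ r) : u ++ x :: x :: t <+ w := by
  induction h generalizing u with
  | nil => simp at hl
  | up y h ih =>
    rcases sublist_cons_iff.1 hl with hl | ⟨s, hs, hl⟩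
    · exact (ih hl hr).cons y
    rcases cons_eq_append_iff.1 hs.symm with ⟨rfl, hs⟩ | ⟨u, rfl, rfl⟩
    · obtain ⟨rfl, rfl⟩ := cons_eq_cons.1 hs
      exact (hr.trans h.right_sublist).cons_cons x
    · exact (ih hl (sublist_of_cons_sublist hr)).cons_cons y
  | down y h ih =>
    rcases sublist_cons_iff.1 hr with hr | ⟨s, hs, hr⟩
    · exact (ih hl hr).cons y
    rcases cons_eq_append_iff.1 hs.symm with ⟨rfl, hs⟩ | ⟨u, rfl, rfl⟩
    · obtain ⟨rfl, rfl⟩ := cons_eq_cons.1 hs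
      exact (hl.trans h.left_sublist).cons_cons x
    · exact (ih (sublist_of_cons_sublist hl) hr).cons_cons y

theorem pair_sublist_of_aab (h : Weave d l r w) (hl : l.Nodup) (hr : r.Nodup)
    (hw : [x, x, y] <+ w) : [x, y] <+ l ∨ [x, y] <+ r := by
  obtain ⟨d', l', r', -, hl', hr', h'⟩ := h.exists_of_sublist hw
  -- Inspect all distributions of the three letters over subwords of `l` and `r`.
  have := hl.sublist hl'
  have := hr.sublist hr'
  rcases h' with _ | ⟨_, h'⟩ | ⟨_, h'⟩ <;> rcases h' with _ | ⟨_, h'⟩ | ⟨_, h'⟩ <;>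
    rcases h' with _ | ⟨_, h'⟩ | ⟨_, h'⟩ <;> cases h' <;> simp_all

theorem pair_sublist_of_abb (h : Weave d l r w) (hl : l.Nodup) (hr : r.Nodup)
    (hw : [x, y, y] <+ w) : [x, y] <+ l ∨ [x, y] <+ r := by
  obtain ⟨d', l', r', -, hl', hr', h'⟩ := h.exists_of_sublist hw
  have := hl.sublist hl'
  have := hr.sublist hr'
  rcases h' with _ | ⟨_, h'⟩ | ⟨_, h'⟩ <;> rcases h' with _ | ⟨_, h'⟩ | ⟨_, h'⟩ <;>
    rcases h' with _ | ⟨_, h'⟩ | ⟨_, h'⟩ <;> cases h' <;> simp_all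

theorem not_abba_sublist (h : Weave d l l w) (hl : l.Nodup) : ¬ [x, y, y, x] <+ w := by
  intro hw
  obtain ⟨d', l', r', -, hl', hr', h'⟩ := h.exists_of_sublist hw
  have := hl.sublist hl'
  have := hl.sublist hr'
  have := fun h ↦ sublist_asymm hl (x := x) (y := y) h
  rcases h' with _ | ⟨_, h'⟩ | ⟨_, h'⟩ <;> rcases h' with _ | ⟨_, h'⟩ | ⟨_, h'⟩ <;>
    rcases h' with _ | ⟨_, h'⟩ | ⟨_, h'⟩ <;> rcases h' with _ | ⟨_, h'⟩ | ⟨_, h'⟩ <;>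
    cases h' <;> simp_all

theorem split_append (h : Weave (p ++ s) (A ++ B) (A ++ B) w)
    (hU : p.count U = A.length) (hD : p.count D ≤ A.length) :
    ∃ R Q w₁ w₂, A = R ++ Q ∧ w = w₁ ++ w₂ ∧ Weave p A R w₁ ∧ Weave s B (Q ++ B) w₂ := by
  obtain ⟨l₁, l₂, r₁, r₂, w₁, w₂, hl, hr, rfl, h₁, h₂⟩ := h.split
  obtain ⟨rfl, rfl⟩ := append_inj hl (hU.symm.trans h₁.count_U)
  rcases append_eq_append_iff.1 hr with ⟨as, rfl, rfl⟩ | ⟨Q, rfl, rfl⟩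
  · obtain rfl : as = [] := by
      have := h₁.count_D
      rw [length_append] at this
      exact eq_nil_of_length_eq_zero (by lia)
    exact ⟨A, [], w₁, w₂, by simp, rfl, by simpa using h₁, by simpa using h₂⟩
  · exact ⟨r₁, Q, w₁, w₂, rfl, rfl, h₁, h₂⟩

theorem abb_sublist_of_DU_sublist (h : Weave d l (c :: r) w) (hl : l.getLast? = some k)
    (hr : k ∈ r) (hd : [D, U] <+ d) : [c, k, k] <+ w := by
  generalize hs : c :: r = s at h
  induction h with
  | nil => simp at hd
  | @up d l r w x h ih =>
    have hd' : [D, U] <+ d := by simpa [sublist_cons_iff] using hd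
    have hl' : l.getLast? = some k := by
      cases l with
      | nil =>
        have hU : 0 < d.count U := count_pos_iff.2 (hd'.subset (by simp))
        simp [h.count_U] at hU
      | cons y l => simpa using hl
    exact (ih hl' hd' hs).cons x
  | down x h =>
    obtain ⟨rfl, rfl⟩ := cons_eq_cons.1 hs
    exact (h.append_cons_cons_sublist (u := []) (singleton_sublist.2 (mem_of_getLast? hl))
      (singleton_sublist.2 hr)).cons_cons c

theorem DU_sublist_of_abb (h : Weave d l r w) (hr : r.Nodup) (hc : c ∉ l)
    (hw : [c, k, k] <+ w) : [D, U] <+ d := by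
  obtain ⟨d', l', r', hd, hl', hr', h'⟩ := h.exists_of_sublist hw
  have := hr.sublist hr'
  have := fun h ↦ hc (hl'.subset h)
  rcases h' with _ | ⟨_, h'⟩ | ⟨_, h'⟩ <;> rcases h' with _ | ⟨_, h'⟩ | ⟨_, h'⟩ <;>
    rcases h' with _ | ⟨_, h'⟩ | ⟨_, h'⟩ <;> cases h' <;>
    first | (simp_all; done) | exact (by simp : [D, U] <+ _).trans hd

theorem eq_nil (h : Weave d l r []) : d = [] ∧ l = [] ∧ r = [] := by
  cases h
  exact ⟨rfl, rfl, rfl⟩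

theorem cons_cases {q : List α} (h : Weave d l (q ++ l) (x :: w)) (hd : IsBallot q.length d) :
    (∃ e k, d = U :: e ∧ l = x :: k ∧
      Weave e k (q ++ [x] ++ k) w ∧ IsBallot (q ++ [x]).length e) ∨
    ∃ e p, d = D :: e ∧ q = x :: p ∧ Weave e l (p ++ l) w ∧ IsBallot p.length e := by
  generalize hr : q ++ l = r at h
  cases h with
  | up x h =>
    subst hr
    exact .inl ⟨_, _, rfl, rfl, by simpa using h, by simpa [IsBallot] using hd⟩
  | down x h =>
    cases q with
    | nil => exact hd.elim
    | cons y q =>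
      obtain ⟨rfl, rfl⟩ := cons_eq_cons.1 hr
      exact .inr ⟨_, _, rfl, rfl, h, hd⟩

theorem inj {q : List α} (h : Weave d l (q ++ l) w) (h' : Weave d' l' (q ++ l') w)
    (hl : (q ++ l).Nodup) (hl' : (q ++ l').Nodup)
    (hd : IsBallot q.length d) (hd' : IsBallot q.length d') : l = l' ∧ d = d' := by
  induction w generalizing q l l' d d' with
  | nil =>
    obtain ⟨rfl, rfl, -⟩ := h.eq_nil
    obtain ⟨rfl, rfl, -⟩ := h'.eq_nil
    exact ⟨rfl, rfl⟩
  | cons x w ih =>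
    rcases h.cons_cases hd with ⟨e, k, rfl, rfl, he, hb⟩ | ⟨e, p, rfl, rfl, he, hb⟩ <;>
      rcases h'.cons_cases hd' with ⟨e', k', rfl, rfl, he', hb'⟩ | ⟨e', p', rfl, hq, he', hb'⟩
    · simpa using ih he he' (by simpa using hl) (by simpa using hl') hb hb'
    · simp [hq] at hl
    · simp at hl'
    · obtain ⟨-, rfl⟩ := cons_eq_cons.1 hq
      simpa using ih he he' hl.of_cons hl'.of_cons hb hb'

end Weave

theorem exists_weave [DecidableEq α] {q w : List α} (hq : q.Nodup)
    (hcount : ∀ x, (q ++ w).count x = 0 ∨ (q ++ w).count x = 2)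
    (hw : ∀ x y, x ≠ y → ¬ [x, y, y, x] <+ q ++ w) :
    ∃ d l, Weave d l (q ++ l) w ∧ IsBallot q.length d := by
  induction w generalizing q with
  | nil =>
    obtain rfl : q = [] := eq_nil_iff_forall_not_mem.2 fun x hx ↦ by
      have := hcount x
      simp only [append_nil, count_eq_one_of_mem hq hx] at this
      lia
    exact ⟨[], [], .nil, trivial⟩
  | cons x w ih =>
    by_cases hx : x ∈ q
    · obtain ⟨y, p, rfl⟩ := exists_cons_of_ne_nil (ne_nil_of_mem hx)
      have hp := nodup_cons.1 hq
      obtain rfl : x = y := by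
        by_contra hxy
        have hxp : x ∈ p := (mem_cons.1 hx).resolve_left hxy
        have hyw : y ∈ w := by
          have := hcount y
          simp only [count_append, count_cons_self, count_eq_zero.2 hp.1, count_cons_of_ne hxy]
            at this
          exact count_pos_iff.1 (by lia)
        exact hw y x (Ne.symm hxy) (.cons_cons y (.append (l₁ := [x]) (singleton_sublist.2 hxp)
          (.cons_cons x (singleton_sublist.2 hyw))))
      obtain ⟨d, l, h, hd⟩ := ih hp.2
        (fun z ↦ by
          have := hcount z
          simp only [count_append, count_cons] at *
          split at this <;> lia)
        (fun y z hyz h ↦ hw y z hyz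
          (h.trans ((sublist_cons_self x p).append (sublist_cons_self x w))))
      exact ⟨D :: d, l, .down x h, hd⟩
    · obtain ⟨d, l, h, hd⟩ := ih (q := q ++ [x])
        (nodup_append'.2 ⟨hq, nodup_singleton x, by simpa using hx⟩)
        (by simpa using hcount) (by simpa using hw)
      exact ⟨U :: d, x :: l, .up x (by simpa using h), by simpa [IsBallot] using hd⟩

end Shuffles

/-! ### The underlying permutations -/

/-- The word `m + j + 1, …, j + 2`: the letters of `pivotPerm m j` larger than its last one. -/
def above (m j : ℕ) : List ℕ := (range' (j + 2) m).reverse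

/-- The word `j, …, 1, j + 1`: what follows the letters `above m j` in `pivotPerm m j`. -/
def below (j : ℕ) : List ℕ := (range' 1 j).reverse ++ [j + 1]

/-- The permutation of `1, …, m + j + 1` ending in `j + 1` whose other letters decrease. These are
the permutations spelled by the first copies of the letters in the words of the theorem. -/
def pivotPerm (m j : ℕ) : List ℕ := above m j ++ below j

theorem mem_above {m j x : ℕ} : x ∈ above m j ↔ j + 2 ≤ x ∧ x < j + 2 + m := by
  simp [above, mem_range'_1]

theorem mem_below {j x : ℕ} : x ∈ below j ↔ 1 ≤ x ∧ x ≤ j + 1 := by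
  rw [below, mem_append, mem_reverse, mem_range'_1, mem_singleton]
  lia

theorem pivotPerm_perm (m j : ℕ) : pivotPerm m j ~ range' 1 (m + j + 1) := by
  have h : range' 1 (m + j + 1) = range' 1 j ++ [j + 1] ++ range' (j + 2) m := by
    rw [show m + j + 1 = j + 1 + m by lia, ← range'_append_1, range'_1_concat, add_comm 1 j,
      ← add_assoc, add_comm 1 j]
  rw [h, pivotPerm]
  exact perm_append_comm.trans (((reverse_perm _).append_right _).append (reverse_perm _))

theorem nodup_pivotPerm (m j : ℕ) : (pivotPerm m j).Nodup :=
  (pivotPerm_perm m j).nodup_iff.2 nodup_range'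

theorem length_pivotPerm (m j : ℕ) : (pivotPerm m j).length = m + j + 1 := by
  simpa using (pivotPerm_perm m j).length_eq

theorem pairwise_pivotPerm (m j : ℕ) :
    (pivotPerm m j).Pairwise fun x y ↦ x ≠ j + 1 ∧ (y < x ∨ y = j + 1) := by
  have hdesc (s n : ℕ) : (range' s n).reverse.Pairwise fun x y ↦ y < x :=
    pairwise_reverse.2 pairwise_lt_range'
  refine pairwise_append.2 ⟨?_, pairwise_append.2 ⟨?_, pairwise_singleton _ _, ?_⟩, ?_⟩
  · exact (hdesc _ _).imp_of_mem fun hx _ h ↦ ⟨by have := mem_above.1 hx; lia, .inl h⟩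
  · refine (hdesc _ _).imp_of_mem fun hx _ h ↦ ⟨?_, .inl h⟩
    have := mem_range'_1.1 (mem_reverse.1 hx)
    lia
  · intro x hx y hy
    have := mem_range'_1.1 (mem_reverse.1 hx)
    exact ⟨by lia, .inr (mem_singleton.1 hy)⟩
  · intro x hx y hy
    have := mem_above.1 hx
    have := mem_below.1 hy
    lia

theorem eq_of_pair_sublist_pivotPerm {m j x y : ℕ} (h : [x, y] <+ pivotPerm m j) (hxy : x < y) :
    y = j + 1 :=
  ((pairwise_pivotPerm m j).forall_sublist h).2.resolve_left hxy.not_gt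

theorem not_pair_sublist_pivotPerm {m j y : ℕ} : ¬ [j + 1, y] <+ pivotPerm m j :=
  fun h ↦ ((pairwise_pivotPerm m j).forall_sublist h).1 rfl

/-- The hypothesis `h` says that the permutation `l` avoids the patterns `123`, `132` and `231`. -/
theorem exists_eq_pivotPerm {N : ℕ} {l : List ℕ} (hl : l ~ range' 1 (N + 1))
    (h : ∀ x y z, [x, y, z] <+ l → y ≤ x) : ∃ m j, m + j = N ∧ l = pivotPerm m j := by
  obtain rfl | ⟨s, k, rfl⟩ := eq_nil_or_concat' l
  · simp at hl
  have hk : 1 ≤ k ∧ k < 1 + (N + 1) := mem_range'_1.1 (hl.subset (by simp))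
  obtain ⟨j, rfl⟩ := Nat.exists_eq_add_of_le' hk.1
  obtain ⟨m, rfl⟩ := Nat.exists_eq_add_of_le' (show j ≤ N by lia)
  have hs := nodup_append.1 (hl.nodup_iff.2 nodup_range')
  have hpivot {x : ℕ} (hx : x ∈ s) : x ≠ j + 1 := hs.2.2 x hx _ (mem_singleton_self _)
  have hdesc : (s ++ [j + 1]).Pairwise fun x y ↦ x ≠ j + 1 ∧ (y < x ∨ y = j + 1) := by
    refine pairwise_append.2 ⟨pairwise_iff_forall_sublist.2 fun {x y} hxy ↦ ?_,
      pairwise_singleton _ _, fun x hx y hy ↦ ⟨hpivot hx, .inr (mem_singleton.1 hy)⟩⟩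
    refine ⟨hpivot (hxy.subset (by simp)), .inl ?_⟩
    refine (h x y (j + 1) (hxy.append_right [j + 1])).lt_of_ne' ?_
    simpa using hs.1.sublist hxy
  have hperm := hl.trans (pivotPerm_perm m j).symm
  exact ⟨m, j, rfl, hperm.eq_of_pairwise (by lia) hdesc (pairwise_pivotPerm m j)⟩

/-! ### The words avoiding the three patterns -/

theorem exists_split_pivotPerm {m j : ℕ} {p r : List DyckStep} {w : List ℕ}
    (hd : p ++ U :: r ∈ dyckPaths (m + j + 1)) (hU : p.count U = m)
    (h : Weave (p ++ U :: r) (pivotPerm m j) (pivotPerm m j) w) :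
    ∃ R Q b B w₁ w₂, above m j = R ++ Q ∧ below j = b :: B ∧ w = w₁ ++ b :: w₂ ∧
      Weave p (above m j) R w₁ ∧ Weave r B (Q ++ below j) w₂ := by
  obtain ⟨R, Q, w₁, w₂, hA, rfl, h₁, h₂⟩ := h.split_append (by simpa [above] using hU)
    (by simpa [above, hU] using hd.1.count_D_le)
  generalize hB : below j = B at h₂
  cases h₂ with
  | @up _ B _ w₂ b h₂ => exact ⟨R, Q, b, B, w₁, w₂, hA, rfl, rfl, h₁, h₂⟩

theorem not_acbb_sublist_of_mem_admissiblePaths {m j a c : ℕ} {d : List DyckStep} {w : List ℕ}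
    (hd : d ∈ admissiblePaths m j) (h : Weave d (pivotPerm m j) (pivotPerm m j) w)
    (ha : a < j + 1) (hc : j + 1 < c) : ¬ [a, c, j + 1, j + 1] <+ w := by
  intro hw
  obtain ⟨hd, p, r, rfl, hU, hr⟩ := hd
  obtain ⟨R, Q, b, B, w₁, w₂, hA, hB, rfl, h₁, h₂⟩ := exists_split_pivotPerm hd hU h
  have haA : a ∉ above m j := fun h ↦ by
    have := mem_above.1 h
    lia
  have hcB : c ∉ below j := fun h ↦ by
    have := mem_below.1 h
    lia
  have haw : a ∉ w₁ := fun h ↦ by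
    rcases mem_append.1 (h₁.perm.subset h) with h | h
    · exact haA h
    · exact haA (hA ▸ mem_append_left Q h)
  have hw₂ : [c, j + 1, j + 1] <+ w₂ := (sublist_of_cons_sublist_append haw hw).tail
  have hcB' : c ∉ B := fun h ↦ hcB (hB ▸ mem_cons_of_mem b h)
  rcases hr with hm | hr
  · have hQ : Q = [] := by
      have hlen := congrArg length hA
      rw [length_append, ← h₁.count_U, ← h₁.count_D, hU, hm] at hlen
      exact eq_nil_of_length_eq_zero (by lia)
    have hcw : c ∈ w₂ := hw₂.subset mem_cons_self
    simpa [hcB, hcB', hQ] using h₂.perm.subset hcw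
  · have hnodup : (Q ++ below j).Nodup :=
      (nodup_pivotPerm m j).sublist ((hA ▸ sublist_append_right R Q).append_right _)
    exact hr (h₂.DU_sublist_of_abb hnodup hcB' hw₂)

theorem mem_admissiblePaths_of_not_acbb_sublist {m j : ℕ} {d : List DyckStep} {w : List ℕ}
    (hd : d ∈ dyckPaths (m + j + 1)) (h : Weave d (pivotPerm m j) (pivotPerm m j) w)
    (hw : ∀ a c, a < j + 1 → j + 1 < c → ¬ [a, c, j + 1, j + 1] <+ w) :
    d ∈ admissiblePaths m j := by
  obtain ⟨p, r, rfl, hU⟩ := exists_eq_append_cons_of_lt_count (a := U) (m := m) (l := d) (by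
    rw [hd.2.1]
    lia)
  refine ⟨hd, p, r, rfl, hU, ?_⟩
  by_contra! hr
  obtain ⟨R, Q, b, B, w₁, w₂, hA, hB, rfl, h₁, h₂⟩ := exists_split_pivotPerm hd hU h
  obtain ⟨c, Q, rfl⟩ : ∃ c Q', Q = c :: Q' := exists_cons_of_ne_nil fun hQ ↦ hr.1 <| by
    rw [h₁.count_D, ← hU, h₁.count_U, hA, hQ, append_nil]
  have hc := mem_above.1 (hA ▸ mem_append_right R mem_cons_self : c ∈ above m j)
  have hB_ne : B ≠ [] := ne_nil_of_length_pos <| by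
    rw [← h₂.count_U]
    exact count_pos_iff.2 (hr.2.subset (by simp))
  have hlast : B.getLast? = some (j + 1) := by
    rw [← getLast?_cons_of_ne_nil hB_ne, ← hB]
    simp [below]
  have hb : b < j + 1 := by
    have hnodup := (nodup_pivotPerm m j).sublist (sublist_append_right _ _)
    rw [hB] at hnodup
    refine (mem_below.1 (hB ▸ mem_cons_self)).2.lt_of_ne ?_
    rintro rfl
    exact hnodup.notMem (mem_of_getLast? hlast)
  exact hw b c hb (by lia) (sublist_append_of_sublist_right
    ((h₂.abb_sublist_of_DU_sublist hlast (by simp [mem_below]) hr.2).cons_cons b))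

theorem Weave.isMultisetPerm_iff {n : ℕ} {d : List DyckStep} {l w : List ℕ} (h : Weave d l l w) :
    IsMultisetPerm n w ↔ l ~ range' 1 n := by
  rw [perm_iff_count]
  refine forall_congr' fun x ↦ ?_
  rw [h.perm.count_eq, count_append, count_range_1']
  split_ifs <;> grind

theorem le_of_triple_sublist {d : List DyckStep} {l w : List ℕ} {x y z : ℕ} (h : Weave d l l w)
    (hl : l.Nodup) (h₁ : Avoids w [1, 1, 2, 3]) (h₂ : Avoids w [1, 3, 2, 2])
    (h₃ : Avoids w [2, 3, 3, 1]) (hxyz : [x, y, z] <+ l) : y ≤ x := by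
  rw [avoids_1123_iff] at h₁
  rw [avoids_1322_iff] at h₂
  rw [avoids_2331_iff] at h₃
  by_contra! hxy
  rcases lt_trichotomy y z with hyz | rfl | hzy
  · exact h₁ x y hxy z hyz (h.append_cons_cons_sublist (u := []) hxyz hxyz)
  · simpa using hl.sublist hxyz
  rcases lt_trichotomy x z with hxz | rfl | hzx
  · exact h₂ x z hxz y hzy (h.append_cons_cons_sublist (u := [x, y]) hxyz hxyz)
  · simpa using hl.sublist hxyz
  · exact h₃ z x hzx y hxy (h.append_cons_cons_sublist (u := [x]) hxyz hxyz)

theorem exists_weave_pivotPerm {N : ℕ} {w : List ℕ} (hw : IsNonnesting (N + 1) w)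
    (h₁ : Avoids w [1, 1, 2, 3]) (h₂ : Avoids w [1, 3, 2, 2]) (h₃ : Avoids w [2, 3, 3, 1]) :
    ∃ m j, m + j = N ∧ ∃ d ∈ admissiblePaths m j, Weave d (pivotPerm m j) (pivotPerm m j) w := by
  obtain ⟨hperm, hnest⟩ := isNonnesting_iff.1 hw
  obtain ⟨d, l, h, hd⟩ := exists_weave (q := []) nodup_nil
    (fun x ↦ by grind [hperm x]) hnest
  have hl := h.isMultisetPerm_iff.1 hperm
  obtain ⟨m, j, rfl, rfl⟩ := exists_eq_pivotPerm hl fun x y z ↦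
    le_of_triple_sublist h (hl.nodup_iff.2 nodup_range') h₁ h₂ h₃
  refine ⟨m, j, rfl, d, mem_admissiblePaths_of_not_acbb_sublist ⟨hd, ?_, ?_⟩ h ?_, h⟩
  · rw [h.count_U, length_pivotPerm]
  · rw [h.count_D, nil_append, length_pivotPerm]
  · exact fun a c ha hc ↦ avoids_1322_iff.1 h₂ a (j + 1) ha c hc

theorem avoids_of_mem_admissiblePaths {m j : ℕ} {d : List DyckStep} {w : List ℕ}
    (hd : d ∈ admissiblePaths m j) (h : Weave d (pivotPerm m j) (pivotPerm m j) w) :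
    IsNonnesting (m + j + 1) w ∧
      Avoids w [1, 1, 2, 3] ∧ Avoids w [1, 3, 2, 2] ∧ Avoids w [2, 3, 3, 1] := by
  have hπ := nodup_pivotPerm m j
  have haab {x y : ℕ} (hxy : [x, x, y] <+ w) : [x, y] <+ pivotPerm m j :=
    or_self_iff.1 (h.pair_sublist_of_aab hπ hπ hxy)
  have habb {x y : ℕ} (hxy : [x, y, y] <+ w) : [x, y] <+ pivotPerm m j :=
    or_self_iff.1 (h.pair_sublist_of_abb hπ hπ hxy)
  rw [isNonnesting_iff, avoids_1123_iff, avoids_1322_iff, avoids_2331_iff]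
  refine ⟨⟨h.isMultisetPerm_iff.2 (pivotPerm_perm m j),
    fun x y _ ↦ h.not_abba_sublist hπ⟩, fun a b hab c hbc hw ↦ ?_, fun a b hab c hbc hw ↦ ?_,
    fun a b _ c hbc hw ↦ ?_⟩
  · have hb := eq_of_pair_sublist_pivotPerm (haab (.trans (by simp) hw)) hab
    have hc := eq_of_pair_sublist_pivotPerm (haab (.trans (by simp) hw)) (hab.trans hbc)
    lia
  · obtain rfl := eq_of_pair_sublist_pivotPerm (habb (.trans (by simp) hw)) hab
    exact not_acbb_sublist_of_mem_admissiblePaths hd h hab hbc hw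
  · obtain rfl := eq_of_pair_sublist_pivotPerm (habb (.trans (by simp) hw)) hbc
    exact not_pair_sublist_pivotPerm (haab (sublist_of_cons_sublist hw))

theorem pivotPerm_inj_right {m m' j j' : ℕ} (h : pivotPerm m j = pivotPerm m' j') : j = j' := by
  simpa [pivotPerm, below, getLast?_append] using congrArg getLast? h

/-- The words shuffled from two copies of `pivotPerm m j` along an admissible path. -/
def pivotWords (m j : ℕ) : Set (List ℕ) :=
  (fun d ↦ weave d (pivotPerm m j) (pivotPerm m j)) '' admissiblePaths m j

theorem weave_spec_pivotPerm {m j : ℕ} {d : List DyckStep} (hd : d ∈ dyckPaths (m + j + 1)) :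
    Weave d (pivotPerm m j) (pivotPerm m j) (weave d (pivotPerm m j) (pivotPerm m j)) :=
  weave_spec (hd.2.1.trans (length_pivotPerm m j).symm) (hd.2.2.trans (length_pivotPerm m j).symm)

theorem weave_pivotPerm_inj {m m' j j' : ℕ} {d d' : List DyckStep}
    (hd : d ∈ dyckPaths (m + j + 1)) (hd' : d' ∈ dyckPaths (m' + j' + 1))
    (h : weave d (pivotPerm m j) (pivotPerm m j) = weave d' (pivotPerm m' j') (pivotPerm m' j')) :
    j = j' ∧ d = d' := by
  obtain ⟨hπ, hdd'⟩ := (weave_spec_pivotPerm hd).inj (q := []) (h ▸ weave_spec_pivotPerm hd')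
    (nodup_pivotPerm m j) (nodup_pivotPerm m' j') hd.1 hd'.1
  exact ⟨pivotPerm_inj_right hπ, hdd'⟩

theorem mem_pivotWords_iff {m j : ℕ} {w : List ℕ} :
    w ∈ pivotWords m j ↔ ∃ d ∈ admissiblePaths m j, Weave d (pivotPerm m j) (pivotPerm m j) w :=
  exists_congr fun _ ↦ and_congr_right fun hd ↦
    ⟨fun h ↦ h ▸ weave_spec_pivotPerm hd.1, Weave.weave_eq⟩

theorem finite_pivotWords (m j : ℕ) : (pivotWords m j).Finite :=
  (finite_admissiblePaths m j).image _

theorem ncard_pivotWords (m j : ℕ) : (pivotWords m j).ncard = (admissiblePaths m j).ncard :=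
  Set.InjOn.ncard_image fun _ hd _ hd' h ↦ (weave_pivotPerm_inj hd.1 hd'.1 h).2

theorem setOf_avoids_eq_biUnion_pivotWords (N : ℕ) :
    {w | IsNonnesting (N + 1) w ∧
      Avoids w [1, 1, 2, 3] ∧ Avoids w [1, 3, 2, 2] ∧ Avoids w [2, 3, 3, 1]} =
    ⋃ x ∈ (antidiagonal N : Set (ℕ × ℕ)), pivotWords x.1 x.2 := by
  ext w
  simp only [Set.mem_ofPred_eq, Set.mem_iUnion, mem_pivotWords_iff, exists_prop,
    Finset.mem_coe, Finset.HasAntidiagonal.mem_antidiagonal, Prod.exists]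
  constructor
  · rintro ⟨hw, h₁, h₂, h₃⟩
    exact exists_weave_pivotPerm hw h₁ h₂ h₃
  · rintro ⟨m, j, rfl, d, hd, h⟩
    exact avoids_of_mem_admissiblePaths hd h

theorem pairwiseDisjoint_pivotWords (N : ℕ) :
    (antidiagonal N : Set (ℕ × ℕ)).PairwiseDisjoint fun x ↦ pivotWords x.1 x.2 := by
  rintro ⟨m, j⟩ hx ⟨m', j'⟩ hy hne
  refine Set.disjoint_left.2 ?_
  rintro _ ⟨d, hd, rfl⟩ ⟨d', hd', h⟩
  obtain ⟨rfl, -⟩ := weave_pivotPerm_inj hd'.1 hd.1 h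
  simp only [Finset.mem_coe, Finset.HasAntidiagonal.mem_antidiagonal] at hx hy
  exact hne (Prod.ext (by lia) rfl)

end NonnestingWord

theorem nonnesting_avoid_1123_1322_2331 (n : ℕ) (hn : 1 ≤ n) :
    {w : List ℕ | IsNonnesting n w ∧
      Avoids w [1,1,2,3] ∧ Avoids w [1,3,2,2] ∧ Avoids w [2,3,3,1]}.ncard =
      catalan (n + 1) - 1 := by
  obtain ⟨N, rfl⟩ := Nat.exists_eq_add_of_le' hn
  rw [NonnestingWord.setOf_avoids_eq_biUnion_pivotWords,
    (Finset.finite_toSet _).ncard_biUnion (fun x _ ↦ NonnestingWord.finite_pivotWords x.1 x.2)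
      (NonnestingWord.pairwiseDisjoint_pivotWords N), finsum_mem_coe_finset]
  simp only [NonnestingWord.ncard_pivotWords]
  exact NonnestingWord.sum_ncard_admissiblePaths N
end
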